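/- arXiv:2106.01737 — 2 statements merged into one kernel-verified Lean document; each statement's English description precedes it below -/
import Mathlib

section
/- Fix an integer d ≥ 2 and set C_d = 1 + (d−1)/d^{d/(d−1)}. For every ε > 0: (i) there exists N ∈ ℕ such that q^{(d)}(n) ≤ (C_d · 2^ε)^n for every n ≥ N; and (ii) there are infinitely many n ∈ ℕ with q^{(d)}(n) ≥ (C_d · 2^{−ε})^n. (That is, q^{(d)}(n) ≤ C_d^{n+o(n)} for all n, and this is tight up to sub-exponential factors for infinitely many n.) -/
/-- A `d`-adic distribution on `X_n`: nonnegative, sums to 1, each value `0` or `d^{-ℓ}`, `ℓ ≥ 1`. -/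
def IsDadicDist (d n : ℕ) (μ : Fin n → ℝ) : Prop :=
  (∀ i, 0 ≤ μ i) ∧ (∑ i, μ i) = 1 ∧
  ∀ i, μ i = 0 ∨ ∃ ℓ : ℕ, 1 ≤ ℓ ∧ μ i = ((d : ℝ) ^ ℓ)⁻¹

/-- An ordered partition of `X_n` into `d` pairwise disjoint sets covering `X_n`. -/
def IsOrderedPartition (d n : ℕ) (S : Fin d → Finset (Fin n)) : Prop :=
  (∀ j j', j ≠ j' → Disjoint (S j) (S j')) ∧
  (Finset.univ.biUnion S = Finset.univ)

/-- `S ∈ Div(μ)`: an ordered partition each of whose parts has `μ`-measure `1/d`. -/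
def MemDiv (d n : ℕ) (μ : Fin n → ℝ) (S : Fin d → Finset (Fin n)) : Prop :=
  IsOrderedPartition d n S ∧ ∀ j, (∑ x ∈ S j, μ x) = 1 / (d : ℝ)

/-- A `d`-adic hitter: a collection of ordered partitions meeting `Div(μ)` for
every non-constant `d`-adic distribution `μ` on `X_n`. -/
def IsHitter (d n : ℕ) (Q : Finset (Fin d → Finset (Fin n))) : Prop :=
  (∀ S ∈ Q, IsOrderedPartition d n S) ∧
  ∀ μ : Fin n → ℝ, IsDadicDist d n μ → (∃ i j, μ i ≠ μ j) → ∃ S ∈ Q, MemDiv d n μ S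

/-- `q^{(d)}(n)`: minimum cardinality of a `d`-adic hitter on `X_n`. -/
noncomputable def qd (d n : ℕ) : ℕ :=
  sInf {m | ∃ Q : Finset (Fin d → Finset (Fin n)), IsHitter d n Q ∧ Q.card = m}

section
open Finset

theorem factorial_mul_pow_le_mul_pow_self (a k : ℕ) :
    a.factorial * a ^ k ≤ k.factorial * a ^ a := by
  rcases le_total a k with h | h
  · calc a.factorial * a ^ k = (a.factorial * a ^ (k - a)) * a ^ a := by
          rw [mul_assoc, ← pow_add, Nat.sub_add_cancel h]
      _ ≤ _ := Nat.mul_le_mul_right _ (Nat.factorial_mul_pow_sub_le_factorial h)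
  · have : a.factorial ≤ k.factorial * a ^ (a - k) := by
      obtain ⟨m, rfl⟩ := Nat.exists_eq_add_of_le h
      rw [Nat.add_sub_cancel_left]
      clear h
      induction m with
      | zero => simp
      | succ m ih =>
        rw [← add_assoc, Nat.factorial_succ, pow_succ']
        calc (k + m + 1) * (k + m).factorial
            ≤ (k + m + 1) * (k.factorial * (k + m + 1) ^ m) := by
              exact Nat.mul_le_mul_left _ (ih.trans
                (Nat.mul_le_mul_left _ (Nat.pow_le_pow_left (Nat.le_succ _) _)))
          _ = _ := by ring
    calc a.factorial * a ^ k ≤ (k.factorial * a ^ (a - k)) * a ^ k := Nat.mul_le_mul_right _ this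
      _ = _ := by rw [mul_assoc, ← pow_add, Nat.sub_add_cancel h]

theorem pow_sum_le_multinomial_mul_prod_pow_self {ι : Type*} [Fintype ι] [DecidableEq ι]
    (a : ι → ℕ) :
    (∑ i, a i) ^ (∑ i, a i) ≤
      ((∑ i, a i) + 1) ^ Fintype.card ι * (Nat.multinomial univ a * ∏ i, a i ^ a i) := by
  set s := ∑ i, a i with hs
  conv_lhs => rw [hs]
  rw [← hs, sum_pow_eq_sum_piAntidiag]
  have hle : ∀ k ∈ piAntidiag (univ : Finset ι) s,
      Nat.multinomial univ k * ∏ i, a i ^ k i ≤ Nat.multinomial univ a * ∏ i, a i ^ a i := by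
    intro k hk
    have hks : ∑ i, k i = s := (mem_piAntidiag.1 hk).1
    have h1 := Nat.multinomial_spec univ k
    have h2 := Nat.multinomial_spec univ a
    rw [hks] at h1
    rw [← hs] at h2
    have h3 : (∏ i, (a i).factorial) * ∏ i, a i ^ k i ≤
        (∏ i, (k i).factorial) * ∏ i, a i ^ a i := by
      rw [← prod_mul_distrib, ← prod_mul_distrib]
      exact prod_le_prod' fun i _ => factorial_mul_pow_le_mul_pow_self _ _
    have hpos : 0 < (∏ i, (k i).factorial) * (∏ i, (a i).factorial) :=
      Nat.mul_pos (prod_pos fun i _ => Nat.factorial_pos _) (prod_pos fun i _ => Nat.factorial_pos _)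
    refine Nat.le_of_mul_le_mul_left ?_ hpos
    calc ((∏ i, (k i).factorial) * (∏ i, (a i).factorial)) *
          (Nat.multinomial univ k * ∏ i, a i ^ k i)
        = s.factorial * ((∏ i, (a i).factorial) * ∏ i, a i ^ k i) := by rw [← h1]; ring
      _ ≤ s.factorial * ((∏ i, (k i).factorial) * ∏ i, a i ^ a i) := Nat.mul_le_mul_left _ h3
      _ = _ := by rw [← h2]; ring
  have hcard : (piAntidiag (univ : Finset ι) s).card ≤ (s + 1) ^ Fintype.card ι := by
    calc (piAntidiag (univ : Finset ι) s).card
        ≤ (Fintype.piFinset fun _ : ι => range (s + 1)).card := by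
          refine card_le_card fun k hk => ?_
          rw [Fintype.mem_piFinset]
          intro i
          have hks : ∑ i, k i = s := (mem_piAntidiag.1 hk).1
          have := single_le_sum (f := k) (fun _ _ => Nat.zero_le _) (mem_univ i)
          rw [mem_range]; omega
      _ = _ := by simp
  calc _ ≤ (piAntidiag (univ : Finset ι) s).card • (Nat.multinomial univ a * ∏ i, a i ^ a i) :=
        sum_le_card_nsmul _ _ _ (by simpa using hle)
    _ ≤ _ := by rw [smul_eq_mul]; exact Nat.mul_le_mul_right _ hcard

theorem card_perm_comp_eq_le {α ι : Type*} [Fintype α] [DecidableEq α] [Fintype ι] [DecidableEq ι]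
    (f g : α → ι) :
    #{σ : Equiv.Perm α | f ∘ σ = g} ≤ ∏ i, (#{x | g x = i}).factorial := by
  rcases Finset.eq_empty_or_nonempty ({σ : Equiv.Perm α | f ∘ σ = g} : Finset _) with h | ⟨τ, hτ⟩
  · simp [h]
  · have hτ' : f ∘ τ = g := by simpa using hτ
    have h := DomMulAct.stabilizer_card g
    simp only [Fintype.card_subtype] at h
    rw [← h]
    refine card_le_card_of_injOn (fun σ => τ⁻¹ * σ) ?_ ?_
    · intro σ hσ
      have hσ' : f ∘ σ = g := by simpa using hσ
      simp only [coe_filter, mem_univ, true_and, Set.mem_ofPred_eq]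
      funext x
      have h1 : f (τ (τ⁻¹ (σ x))) = g (τ⁻¹ (σ x)) := congrFun hτ' _
      have h2 : f (σ x) = g x := congrFun hσ' _
      simpa [h2] using h1.symm
    · intro σ _ σ' _ h
      exact mul_left_cancel h

theorem multinomial_le_card_fiber {α ι : Type*} [Fintype α] [DecidableEq α] [Fintype ι]
    [DecidableEq ι] (a : ι → ℕ) (ha : ∑ i, a i = Fintype.card α) :
    Nat.multinomial univ a ≤ #{f : α → ι | ∀ i, #{x | f x = i} = a i} := by
  set F := ({f : α → ι | ∀ i, #{x | f x = i} = a i} : Finset (α → ι)) with hF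
  obtain ⟨e⟩ : Nonempty (α ≃ Σ i, Fin (a i)) := by
    rw [← Fintype.card_eq]; simp [ha]
  set f₀ : α → ι := fun x => (e x).1 with hf₀
  have hf₀c : ∀ i, #{x | f₀ x = i} = a i := by
    intro i
    have h1 : #{x | f₀ x = i} = #{y : Σ i, Fin (a i) | y.1 = i} := by
      refine card_bij (fun x _ => e x) (by simp [hf₀]) (by simp) ?_
      intro b hb
      exact ⟨e.symm b, by simpa [hf₀] using hb, by simp⟩
    rw [h1]
    have h2 : ({y : Σ i, Fin (a i) | y.1 = i} : Finset _) =
        univ.map (Function.Embedding.sigmaMk i) := by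
      ext ⟨j, y⟩
      simp only [mem_filter, mem_univ, true_and, mem_map, Function.Embedding.sigmaMk_apply]
      constructor
      · rintro rfl; exact ⟨y, rfl⟩
      · rintro ⟨z, hz⟩; exact (congrArg Sigma.fst hz).symm
    rw [h2]; simp
  have hmaps : ∀ σ : Equiv.Perm α, f₀ ∘ σ ∈ F := by
    intro σ
    rw [hF, mem_filter]
    refine ⟨mem_univ _, fun i => ?_⟩
    rw [← hf₀c i]
    refine card_bij (fun x _ => σ x) (by simp) (by simp) ?_
    intro b hb
    exact ⟨σ.symm b, by simpa using hb, by simp⟩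
  have h := card_le_mul_card_image_of_maps_to (s := (univ : Finset (Equiv.Perm α)))
    (f := fun σ : Equiv.Perm α => f₀ ∘ σ) (t := F) (fun σ _ => hmaps σ) (n := ∏ i, (a i).factorial) (by
      intro g hg
      have hg' : ∀ i, #{x | g x = i} = a i := by simpa [hF] using hg
      calc _ ≤ ∏ i, (#{x | g x = i}).factorial := card_perm_comp_eq_le f₀ g
        _ = _ := by simp [hg'])
  rw [card_univ, Fintype.card_perm, ← ha, ← Nat.multinomial_spec] at h
  exact Nat.le_of_mul_le_mul_left h (prod_pos fun i _ => Nat.factorial_pos _)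

theorem exists_hitting_set {β I : Type*} [DecidableEq β] [Fintype I] (Y : Finset β)
    (hY : Y.Nonempty) (A : I → Finset β) (hA : ∀ i, A i ⊆ Y) (ρ : ℝ) (hρ : 0 < ρ)
    (hAρ : ∀ i, ρ * #Y ≤ #(A i)) :
    ∃ Q ⊆ Y, (#Q : ℝ) ≤ Real.log (Fintype.card I) / ρ + 1 ∧ ∀ i, ∃ y ∈ Q, y ∈ A i := by
  set t := ⌊Real.log (Fintype.card I) / ρ⌋₊ + 1 with ht
  have hYpos : (0 : ℝ) < #Y := by exact_mod_cast hY.card_pos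
  have hlog0 : 0 ≤ Real.log (Fintype.card I) := Real.log_natCast_nonneg _
  have hlt : Real.log (Fintype.card I) < ρ * t := by
    have := Nat.lt_floor_add_one (Real.log (Fintype.card I) / ρ)
    rw [div_lt_iff₀ hρ] at this
    rw [ht]; push_cast; linarith
  have hcard : #(univ.biUnion fun i => Fintype.piFinset fun _ : Fin t => Y \ A i) <
      #(Fintype.piFinset fun _ : Fin t => Y) := by
    have h1 : (#(univ.biUnion fun i => Fintype.piFinset fun _ : Fin t => Y \ A i) : ℝ) ≤
        Fintype.card I * (Real.exp (-ρ) * #Y) ^ t := by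
      calc (#(univ.biUnion fun i => Fintype.piFinset fun _ : Fin t => Y \ A i) : ℝ)
          ≤ ∑ i : I, ((#(Fintype.piFinset fun _ : Fin t => Y \ A i) : ℕ) : ℝ) := by
            exact_mod_cast card_biUnion_le
        _ ≤ ∑ i : I, (Real.exp (-ρ) * #Y) ^ t := by
            refine sum_le_sum fun i _ => ?_
            rw [Fintype.card_piFinset]
            simp only [prod_const, card_univ, Fintype.card_fin]
            push_cast
            gcongr
            rw [card_sdiff_of_subset (hA i), Nat.cast_sub (card_le_card (hA i))]
            have h2 := hAρ i
            have h3 := Real.add_one_le_exp (-ρ)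
            nlinarith
        _ = _ := by simp
    have h2 : (Fintype.card I : ℝ) * (Real.exp (-ρ) * #Y) ^ t < (#Y : ℝ) ^ t := by
      rw [mul_pow, ← mul_assoc]
      have h3 : (Fintype.card I : ℝ) * Real.exp (-ρ) ^ t < 1 := by
        rcases Nat.eq_zero_or_pos (Fintype.card I) with h0 | h0
        · simp [h0]
        · have h0' : (0 : ℝ) < Fintype.card I := by exact_mod_cast h0
          rw [← Real.exp_nat_mul]
          calc (Fintype.card I : ℝ) * Real.exp (t * -ρ)
              = Real.exp (Real.log (Fintype.card I) + t * -ρ) := by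
                rw [Real.exp_add, Real.exp_log h0']
            _ < 1 := by rw [Real.exp_lt_one_iff]; linarith
      have h4 : (0 : ℝ) < (#Y : ℝ) ^ t := by positivity
      nlinarith
    have h5 : (#(univ.biUnion fun i => Fintype.piFinset fun _ : Fin t => Y \ A i) : ℝ) <
        (#(Fintype.piFinset fun _ : Fin t => Y) : ℝ) := by
      rw [Fintype.card_piFinset]
      simp only [prod_const, card_univ, Fintype.card_fin]
      push_cast
      exact h1.trans_lt h2
    exact_mod_cast h5
  obtain ⟨g, hg, hg'⟩ := exists_mem_notMem_of_card_lt_card hcard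
  rw [Fintype.mem_piFinset] at hg
  refine ⟨univ.image g, ?_, ?_, ?_⟩
  · intro y hy
    obtain ⟨i, -, rfl⟩ := mem_image.1 hy
    exact hg i
  · have h1 : #(univ.image g) ≤ t := by simpa using card_image_le (s := univ) (f := g)
    have h2 : (t : ℝ) ≤ Real.log (Fintype.card I) / ρ + 1 := by
      rw [ht]; push_cast
      have := Nat.floor_le (div_nonneg hlog0 hρ.le)
      linarith
    exact le_trans (by exact_mod_cast h1) h2
  · intro i
    by_contra! hcon
    refine hg' (mem_biUnion.2 ⟨i, mem_univ _, Fintype.mem_piFinset.2 fun a => ?_⟩)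
    exact mem_sdiff.2 ⟨hg a, hcon _ (mem_image_of_mem g (mem_univ a))⟩

theorem mul_log_le_chord {p q : ℝ} (hp : 0 < p) (hp1 : p < 1) (hq : p ≤ q) (hq1 : q ≤ 1) :
    q * Real.log q ≤ (1 - q) * (p * Real.log p / (1 - p)) := by
  have h := Real.convexOn_mul_log.2 (Set.mem_Ici.2 hp.le) (Set.mem_Ici.2 zero_le_one)
    (div_nonneg (by linarith) (by linarith) : 0 ≤ (1 - q) / (1 - p))
    (div_nonneg (by linarith) (by linarith) : 0 ≤ (q - p) / (1 - p))
    (by have : 1 - p ≠ 0 := by linarith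
        field_simp; ring)
  have h1 : ((1 - q) / (1 - p)) * p + ((q - p) / (1 - p)) * 1 = q := by
    have : 1 - p ≠ 0 := by linarith
    field_simp; ring
  simp only [smul_eq_mul] at h
  rw [h1] at h
  simp only [Real.log_one, mul_zero, add_zero] at h
  calc _ ≤ _ := h
    _ = _ := by ring

theorem one_le_mul_multinomial_mul_prod {d : ℕ} (o : Fin d) {p : ℝ} (hp : 0 < p) (hp1 : p < 1)
    (a : Fin d → ℕ) (s : ℕ) (hs : ∑ j, a j = s) (v w : Fin d → ℝ) (hv : ∀ j, j ≠ o → 0 < v j)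
    (hav : ∀ j, j ≠ o → (a j : ℝ) ≤ v j * s) (hao : p * s ≤ a o) (hwo : w o = 1)
    (hw : ∀ j, j ≠ o → w j = Real.exp (p * Real.log p / (1 - p)) * v j) :
    1 ≤ ((s : ℝ) + 1) ^ d * ((Nat.multinomial univ a : ℝ) * ∏ j, w j ^ a j) := by
  rcases Nat.eq_zero_or_pos s with rfl | h0
  · have ha : ∀ j, a j = 0 := by simpa [sum_eq_zero_iff] using hs
    have : (1 : ℝ) ≤ Nat.multinomial univ a := by exact_mod_cast Nat.multinomial_pos univ a
    simpa [ha] using this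
  have hs0 : (0 : ℝ) < s := by exact_mod_cast h0
  have hmode := pow_sum_le_multinomial_mul_prod_pow_self a
  rw [hs, Fintype.card_fin] at hmode
  have hmode' : (s : ℝ) ^ s ≤ ((s : ℝ) + 1) ^ d *
      ((Nat.multinomial univ a : ℝ) * ∏ j, (a j : ℝ) ^ a j) := by exact_mod_cast hmode
  set l := Real.exp (p * Real.log p / (1 - p)) with hl
  have hlpos : 0 < l := Real.exp_pos _
  have hle : a o ≤ s := by rw [← hs]; exact single_le_sum (fun _ _ => Nat.zero_le _) (mem_univ o)
  have hsum : ∑ j ∈ univ.erase o, a j = s - a o := by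
    have := add_sum_erase univ a (mem_univ o)
    omega
  have hao0 : (0 : ℝ) < a o := lt_of_lt_of_le (mul_pos hp hs0) hao
  have key : (a o : ℝ) ^ a o ≤ (s : ℝ) ^ a o * l ^ (s - a o) := by
    have h1 := mul_log_le_chord (q := a o / s) hp hp1 (by rwa [le_div_iff₀ hs0])
      (by rw [div_le_one hs0]; exact_mod_cast hle)
    rw [← Real.log_le_log_iff (by positivity) (by positivity),
      Real.log_mul (by positivity) (by positivity), Real.log_pow, Real.log_pow, Real.log_pow, hl,
      Real.log_exp, Nat.cast_sub hle]
    rw [Real.log_div hao0.ne' hs0.ne'] at h1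
    have h2 := mul_le_mul_of_nonneg_left h1 hs0.le
    have e1 : (s : ℝ) * ((a o : ℝ) / s * (Real.log (a o) - Real.log s)) =
        (a o : ℝ) * (Real.log (a o) - Real.log s) := by field_simp
    have e2 : (s : ℝ) * ((1 - (a o : ℝ) / s) * (p * Real.log p / (1 - p))) =
        ((s : ℝ) - a o) * (p * Real.log p / (1 - p)) := by field_simp
    rw [e1, e2] at h2
    linarith
  have hprod : ∏ j, (a j : ℝ) ^ a j ≤ (s : ℝ) ^ s * ∏ j, w j ^ a j := by
    rw [← mul_prod_erase univ _ (mem_univ o), ← mul_prod_erase univ (fun j => w j ^ a j) (mem_univ o)]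
    have h1 : ∏ j ∈ univ.erase o, (a j : ℝ) ^ a j ≤ ∏ j ∈ univ.erase o, (v j * s) ^ a j := by
      refine prod_le_prod (fun j _ => by positivity) fun j hj => ?_
      exact pow_le_pow_left₀ (Nat.cast_nonneg _) (hav j (ne_of_mem_erase hj)) _
    have h2 : ∏ j ∈ univ.erase o, (v j * (s : ℝ)) ^ a j =
        (∏ j ∈ univ.erase o, v j ^ a j) * (s : ℝ) ^ (s - a o) := by
      simp_rw [mul_pow]
      rw [prod_mul_distrib, prod_pow_eq_pow_sum, hsum]
    have h3 : ∏ j ∈ univ.erase o, w j ^ a j =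
        l ^ (s - a o) * ∏ j ∈ univ.erase o, v j ^ a j := by
      rw [← hsum, ← prod_pow_eq_pow_sum, ← prod_mul_distrib]
      exact prod_congr rfl fun j hj => by rw [hw j (ne_of_mem_erase hj), mul_pow]
    have hV : 0 ≤ ∏ j ∈ univ.erase o, v j ^ a j :=
      prod_nonneg fun j hj => (pow_pos (hv j (ne_of_mem_erase hj)) _).le
    rw [h2] at h1
    rw [h3, hwo, one_pow, one_mul]
    calc (a o : ℝ) ^ a o * ∏ j ∈ univ.erase o, (a j : ℝ) ^ a j
        ≤ ((s : ℝ) ^ a o * l ^ (s - a o)) *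
          ((∏ j ∈ univ.erase o, v j ^ a j) * (s : ℝ) ^ (s - a o)) :=
          mul_le_mul key h1 (prod_nonneg fun j _ => by positivity) (by positivity)
      _ = (s : ℝ) ^ (a o + (s - a o)) * (l ^ (s - a o) * ∏ j ∈ univ.erase o, v j ^ a j) := by
          rw [pow_add]; ring
      _ = _ := by rw [Nat.add_sub_cancel' hle]
  have hss : (0 : ℝ) < (s : ℝ) ^ s := by positivity
  have hfin : (s : ℝ) ^ s * 1 ≤ (s : ℝ) ^ s *
      (((s : ℝ) + 1) ^ d * ((Nat.multinomial univ a : ℝ) * ∏ j, w j ^ a j)) := by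
    calc (s : ℝ) ^ s * 1 = (s : ℝ) ^ s := mul_one _
      _ ≤ _ := hmode'
      _ ≤ ((s : ℝ) + 1) ^ d *
          ((Nat.multinomial univ a : ℝ) * ((s : ℝ) ^ s * ∏ j, w j ^ a j)) := by gcongr
      _ = _ := by ring
  exact le_of_mul_le_mul_left hfin hss

theorem exists_le_sum_eq_of_le_sum {ι : Type*} [DecidableEq ι] (A : Finset ι) (R : ι → ℕ) (s : ℕ)
    (h : s ≤ ∑ j ∈ A, R j) : ∃ a : ι → ℕ, (∀ j, a j ≤ R j) ∧ ∑ j ∈ A, a j = s := by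
  induction s with
  | zero => exact ⟨0, by simp, by simp⟩
  | succ s ih =>
    obtain ⟨a, ha, hsum⟩ := ih (by omega)
    obtain ⟨j, hj, hlt⟩ := exists_lt_of_sum_lt (s := A) (f := a) (g := R) (by omega)
    refine ⟨fun k => a k + if k = j then 1 else 0, fun k => ?_, ?_⟩
    · have := ha k
      dsimp only
      split_ifs with hk
      · subst hk; omega
      · simpa using this
    · rw [sum_add_distrib, hsum]; simp [hj]

/-- Filling the parts `j ≠ o` greedily with the heaviest elements, all levels below `m + 1`. -/
theorem exists_greedy_filling {d : ℕ} (hd : 2 ≤ d) (o : Fin d) (s : ℕ → ℕ) (hs0 : s 0 = 0)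
    (m : ℕ) :
    (∃ a : ℕ → Fin d → ℕ, (∀ i, ∑ j, a i j = s i) ∧ (∀ i, m < i → ∀ j, j ≠ o → a i j = 0) ∧
      ∀ j, j ≠ o → ∑ i ∈ range (m + 1), (a i j : ℝ) * ((d : ℝ) ^ i)⁻¹ = (d : ℝ)⁻¹) ∨
    (∃ (a : ℕ → Fin d → ℕ) (R : Fin d → ℕ), (∀ i, i ≤ m → ∑ j, a i j = s i) ∧
      (∀ i, a i o = 0) ∧
      ∀ j, j ≠ o → ∑ i ∈ range (m + 1), (a i j : ℝ) * ((d : ℝ) ^ i)⁻¹ +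
        R j * ((d : ℝ) ^ (m + 1))⁻¹ = (d : ℝ)⁻¹) := by
  have hd0 : (d : ℝ) ≠ 0 := by positivity
  induction m with
  | zero =>
    right
    exact ⟨fun _ _ => 0, fun _ => 1, by simp [hs0], by simp, by simp⟩
  | succ m ih =>
    rcases ih with ⟨a, h1, h2, h3⟩ | ⟨a, R, h1, h2, h3⟩
    · left
      refine ⟨a, h1, fun i hi => h2 i (by omega), fun j hj => ?_⟩
      rw [sum_range_succ, h3 j hj, h2 (m + 1) (by omega) j hj]; simp
    · by_cases hc : s (m + 1) ≤ ∑ j ∈ univ.erase o, R j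
      · right
        obtain ⟨b, hb, hbs⟩ := exists_le_sum_eq_of_le_sum _ R _ hc
        refine ⟨fun i j => if i = m + 1 then (if j = o then 0 else b j) else a i j,
          fun j => d * (R j - b j), fun i hi => ?_, fun i => ?_, fun j hj => ?_⟩
        · by_cases him : i = m + 1
          · subst him
            simp only [if_true]
            rw [← hbs, ← add_sum_erase univ _ (mem_univ o), if_pos rfl, zero_add]
            exact sum_congr rfl fun j hj => by rw [if_neg (ne_of_mem_erase hj)]
          · simp only [if_neg him]; exact h1 i (by omega)
        · simp [h2 i]
        · dsimp only
          rw [sum_range_succ, if_pos rfl, if_neg hj, ← h3 j hj,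
            sum_congr rfl fun i hi => by rw [if_neg (by have := mem_range.1 hi; omega)]]
          push_cast [Nat.cast_sub (hb j)]
          rw [pow_succ (d : ℝ) (m + 1)]
          field_simp
          ring
      · left
        push Not at hc
        refine ⟨fun i j => if i = m + 1 then
            (if j = o then s (m + 1) - ∑ j ∈ univ.erase o, R j else R j)
          else if i ≤ m then a i j else if j = o then s i else 0,
          fun i => ?_, fun i hi j hj => ?_, fun j hj => ?_⟩
        · by_cases him : i = m + 1
          · subst him
            simp only [if_true]
            have hR : ∑ j ∈ univ.erase o,
                (if j = o then s (m + 1) - ∑ j ∈ univ.erase o, R j else R j) =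
                  ∑ j ∈ univ.erase o, R j :=
              sum_congr rfl fun j hj => if_neg (ne_of_mem_erase hj)
            rw [← add_sum_erase univ _ (mem_univ o), if_pos rfl, hR]
            omega
          · simp only [if_neg him]
            by_cases him' : i ≤ m
            · simp only [if_pos him']; exact h1 i him'
            · simp [if_neg him']
        · dsimp only
          rw [if_neg (by omega), if_neg (by omega), if_neg hj]
        · dsimp only
          rw [sum_range_succ, if_pos rfl, if_neg hj, ← h3 j hj]
          congr 1
          refine sum_congr rfl fun i hi => ?_
          have := mem_range.1 hi
          rw [if_neg (by omega), if_pos (by omega)]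

/-- Rounding a proportional filling of the parts `j ≠ o`, level by level. -/
theorem exists_proportional_filling {d : ℕ} (hd : 1 ≤ d) (o : Fin d) (s : ℕ → ℕ) (U : ℕ → ℝ)
    (t : ℕ) (hrec : ∀ i < t, U (i + 1) = d * (U i - s i)) (hUt : U t = 0) {c : ℝ} (hc : 0 < c)
    (v : Fin d → ℝ) {p : ℝ} (hp : 0 ≤ p) (hv : ∑ j ∈ univ.erase o, v j ≤ 1 - p) (k : ℕ) :
    ∀ i₀, i₀ + k = t → (∀ i, i₀ ≤ i → i < t → c ≤ U i) → ∀ R : Fin d → ℕ,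
      (∀ j, j ≠ o → (R j : ℝ) ≤ (v j - k * (d / c)) * U i₀) →
      ∃ a : ℕ → Fin d → ℕ,
        (∀ i, i₀ ≤ i → i < t → ∑ j, a i j = s i ∧ (∀ j, j ≠ o → (a i j : ℝ) ≤ v j * s i) ∧
          p * s i ≤ a i o) ∧
        ∀ j, j ≠ o → ∑ i ∈ Ico i₀ t, (a i j : ℝ) * ((d : ℝ) ^ i)⁻¹ = R j * ((d : ℝ) ^ i₀)⁻¹ := by
  have hd0 : (0 : ℝ) < d := by positivity
  induction k with
  | zero =>
    intro i₀ hi₀ _ R hR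
    obtain rfl : i₀ = t := by omega
    refine ⟨fun _ _ => 0, fun i h1 h2 => by omega, fun j hj => ?_⟩
    have h := hR j hj
    rw [hUt, mul_zero] at h
    have : (R j : ℝ) = 0 := le_antisymm h (Nat.cast_nonneg _)
    simp [this]
  | succ k ih =>
    intro i₀ hi₀ hU R hR
    have hU0 : 0 < U i₀ := hc.trans_le (hU i₀ le_rfl (by omega))
    have hr := hrec i₀ (by omega)
    have hs0 : (0 : ℝ) ≤ s i₀ := Nat.cast_nonneg _
    have hsU : (s i₀ : ℝ) ≤ U i₀ := by
      have h0 : 0 ≤ U (i₀ + 1) := by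
        rcases (show i₀ + 1 < t ∨ i₀ + 1 = t by omega) with h | h
        · exact hc.le.trans (hU _ (by omega) h)
        · rw [h, hUt]
      rw [hr] at h0
      linarith [nonneg_of_mul_nonneg_right h0 hd0]
    have hdc : 0 ≤ ((k + 1 : ℕ) : ℝ) * (d / c) := by positivity
    set b : Fin d → ℕ := fun j => ⌊(R j : ℝ) * s i₀ / U i₀⌋₊ with hb
    have hbR : ∀ j, b j ≤ R j := fun j => by
      refine Nat.floor_le_of_le ?_
      rw [div_le_iff₀ hU0]
      exact mul_le_mul_of_nonneg_left hsU (Nat.cast_nonneg _)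
    have hb1 : ∀ j, (b j : ℝ) ≤ R j * s i₀ / U i₀ := fun j => Nat.floor_le (by positivity)
    have hb2 : ∀ j, (R j : ℝ) * s i₀ / U i₀ < b j + 1 := fun j => Nat.lt_floor_add_one _
    have hbv : ∀ j, j ≠ o → (b j : ℝ) ≤ v j * s i₀ := fun j hj => by
      refine (hb1 j).trans ?_
      rw [div_le_iff₀ hU0]
      have h1 : (R j : ℝ) ≤ v j * U i₀ := (hR j hj).trans (by nlinarith)
      nlinarith
    have hbs : ((∑ j ∈ univ.erase o, b j : ℕ) : ℝ) ≤ (1 - p) * s i₀ := by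
      push_cast
      refine (sum_le_sum fun j hj => hbv j (ne_of_mem_erase hj)).trans ?_
      rw [← sum_mul]
      exact mul_le_mul_of_nonneg_right hv hs0
    have hbs' : ∑ j ∈ univ.erase o, b j ≤ s i₀ := by
      have : ((∑ j ∈ univ.erase o, b j : ℕ) : ℝ) ≤ s i₀ := hbs.trans (by nlinarith)
      exact_mod_cast this
    obtain ⟨a, ha1, ha2⟩ := ih (i₀ + 1) (by omega) (fun i h1 h2 => hU i (by omega) h2)
      (fun j => d * (R j - b j)) (fun j hj => by
        push_cast [Nat.cast_sub (hbR j)]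
        rcases (show i₀ + 1 < t ∨ i₀ + 1 = t by omega) with h | h
        · have hcU := hU (i₀ + 1) (by omega) h
          have h1 : (R j : ℝ) - b j ≤ (v j - ((k + 1 : ℕ) : ℝ) * (d / c)) * (U i₀ - s i₀) + 1 := by
            have e : (R j : ℝ) * s i₀ / U i₀ = R j - R j * (U i₀ - s i₀) / U i₀ := by
              field_simp; ring
            have e2 : (R j : ℝ) * (U i₀ - s i₀) / U i₀ ≤
                (v j - ((k + 1 : ℕ) : ℝ) * (d / c)) * (U i₀ - s i₀) := by
              rw [div_le_iff₀ hU0]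
              have := mul_le_mul_of_nonneg_right (hR j hj) (sub_nonneg.2 hsU)
              linarith
            have := hb2 j
            linarith
          have h2 : (d : ℝ) ≤ d / c * U (i₀ + 1) := by
            rw [div_mul_eq_mul_div, le_div_iff₀ hc]
            exact mul_le_mul_of_nonneg_left hcU hd0.le
          have h3 := mul_le_mul_of_nonneg_left h1 hd0.le
          push_cast at h3
          have h4 : (d : ℝ) * ((v j - (k + 1) * (d / c)) * (U i₀ - s i₀) + 1) =
              (v j - (k + 1) * (d / c)) * U (i₀ + 1) + d := by rw [hr]; ring
          rw [h4] at h3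
          linarith
        · have hUs : U i₀ = s i₀ := by
            rw [h, hUt] at hr
            rcases mul_eq_zero.1 hr.symm with h0 | h0
            · exact absurd h0 hd0.ne'
            · linarith
          have : b j = R j := by
            rw [hb]; dsimp only
            rw [hUs, mul_div_assoc, div_self (hUs ▸ hU0.ne'), mul_one, Nat.floor_natCast]
          rw [this, h, hUt]; simp)
    refine ⟨fun i j => if i = i₀ then
      (if j = o then s i₀ - ∑ j ∈ univ.erase o, b j else b j) else a i j,
      fun i h1 h2 => ?_, fun j hj => ?_⟩
    · by_cases hi : i = i₀
      · subst hi
        simp only [if_true]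
        refine ⟨?_, fun j hj => ?_, ?_⟩
        · have hR : ∑ j ∈ univ.erase o,
              (if j = o then s i - ∑ j ∈ univ.erase o, b j else b j) =
                ∑ j ∈ univ.erase o, b j :=
            sum_congr rfl fun j hj => if_neg (ne_of_mem_erase hj)
          rw [← add_sum_erase univ _ (mem_univ o), if_pos rfl, hR]
          omega
        · rw [if_neg hj]; exact hbv j hj
        · rw [Nat.cast_sub hbs']
          linarith
      · simp only [if_neg hi]
        exact ha1 i (by omega) h2
    · have h := ha2 j hj
      rw [sum_eq_sum_Ico_succ_bot (by omega)]
      dsimp only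
      rw [if_pos rfl, if_neg hj,
        sum_congr rfl fun i hi => by rw [if_neg (by have := mem_Ico.1 hi; omega)], h]
      push_cast [Nat.cast_sub (hbR j)]
      rw [pow_succ]
      field_simp
      ring

theorem one_le_multinomial_mul_prod_of_eq_zero {d : ℕ} (o : Fin d) (a : Fin d → ℕ) (w : Fin d → ℝ)
    (hwo : w o = 1) (ha : ∀ j, j ≠ o → a j = 0) :
    1 ≤ (Nat.multinomial univ a : ℝ) * ∏ j, w j ^ a j := by
  have h : ∏ j, w j ^ a j = 1 := prod_eq_one fun j _ => by
    by_cases hj : j = o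
    · rw [hj, hwo, one_pow]
    · rw [ha j hj, pow_zero]
  rw [h, mul_one]
  exact_mod_cast Nat.multinomial_pos univ a

theorem pow_le_prod_multinomial_mul_prod {d : ℕ} (hd : 2 ≤ d) (o : Fin d) (a : ℕ → Fin d → ℕ)
    (w : Fin d → ℝ) {x : ℝ} (hx : 0 < x) (hx1 : x ≤ 1) (hwo : w o = 1)
    (hw : ∀ j, j ≠ o → x ≤ w j) (m : ℕ)
    (ha : ∀ j, j ≠ o → ∑ i ∈ range (m + 1), (a i j : ℝ) * ((d : ℝ) ^ i)⁻¹ ≤ (d : ℝ)⁻¹) :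
    x ^ (d * d ^ m) ≤
      ∏ i ∈ range (m + 1), ((Nat.multinomial univ (a i) : ℝ) * ∏ j, w j ^ a i j) := by
  have hd0 : (0 : ℝ) < d := by positivity
  have hd1 : (1 : ℝ) ≤ d := by exact_mod_cast (by omega : 1 ≤ d)
  have hcount : ∀ j ∈ univ.erase o, ∑ i ∈ range (m + 1), a i j ≤ d ^ m := fun j hj => by
    have h1 : (∑ i ∈ range (m + 1), (a i j : ℝ)) * ((d : ℝ) ^ m)⁻¹ ≤ 1 := by
      rw [sum_mul]
      refine le_trans (sum_le_sum fun i hi => ?_)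
        ((ha j (ne_of_mem_erase hj)).trans (inv_le_one_of_one_le₀ hd1))
      have := mem_range.1 hi
      gcongr
      omega
    rw [← div_eq_mul_inv, div_le_one (by positivity)] at h1
    exact_mod_cast h1
  have hterm : ∀ i ∈ range (m + 1), x ^ (∑ j ∈ univ.erase o, a i j) ≤
      (Nat.multinomial univ (a i) : ℝ) * ∏ j, w j ^ a i j := fun i _ => by
    have h1 : (1 : ℝ) ≤ Nat.multinomial univ (a i) := by
      exact_mod_cast Nat.multinomial_pos univ (a i)
    have h2 : x ^ (∑ j ∈ univ.erase o, a i j) ≤ ∏ j, w j ^ a i j := by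
      rw [← mul_prod_erase univ _ (mem_univ o), hwo, one_pow, one_mul, ← prod_pow_eq_pow_sum]
      exact prod_le_prod (fun j _ => by positivity) fun j hj =>
        pow_le_pow_left₀ hx.le (hw j (ne_of_mem_erase hj)) _
    calc _ ≤ _ := h2
      _ = 1 * ∏ j, w j ^ a i j := (one_mul _).symm
      _ ≤ _ := mul_le_mul_of_nonneg_right h1 ((pow_pos hx _).le.trans h2)
  calc x ^ (d * d ^ m) ≤ x ^ (∑ i ∈ range (m + 1), ∑ j ∈ univ.erase o, a i j) := by
        refine pow_le_pow_of_le_one hx.le hx1 ?_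
        rw [sum_comm]
        refine (sum_le_sum hcount).trans ?_
        rw [sum_const, smul_eq_mul]
        refine Nat.mul_le_mul_right _ ?_
        rw [card_erase_of_mem (mem_univ o), card_univ, Fintype.card_fin]
        omega
    _ = ∏ i ∈ range (m + 1), x ^ (∑ j ∈ univ.erase o, a i j) := (prod_pow_eq_pow_sum _ _ _).symm
    _ ≤ _ := prod_le_prod (fun i _ => by positivity) hterm

theorem le_chord_mul_of_le {d D η M X : ℝ} (hD : D * d = 1) (hd : 1 ≤ d) (hη : 0 < η) (hηD : η < D)
    (hM : 0 < M) (hX : X ≤ (d - 1) * M) :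
    X ≤ (1 - D + η / 2) * (M + X - η * M / 2) := by
  have h1 : (1 - D + η / 2) * (M + X - η * M / 2) - X =
      (D - η / 2) * ((d - 1) * M - X) + η * M / 2 * (D - η / 2 + (d - 1)) := by
    linear_combination (-M) * hD
  have h2 : 0 ≤ (D - η / 2) * ((d - 1) * M - X) := mul_nonneg (by linarith) (by linarith)
  have h3 : 0 ≤ η * M / 2 * (D - η / 2 + (d - 1)) := mul_nonneg (by positivity) (by linarith)
  linarith

set_option maxHeartbeats 1000000 in
/-- A sequence of level counts with total mass one can be split among `d` parts so that all parts
other than `o` get mass `1 / d`, in many ways. -/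
theorem exists_level_counts {d : ℕ} (hd : 2 ≤ d) (o : Fin d) {η : ℝ} (hη : 0 < η)
    (hηd : η < (d : ℝ)⁻¹) {p lam δ : ℝ} (hp : p = (d : ℝ)⁻¹ - η)
    (hlam : lam = Real.exp (p * Real.log p / (1 - p))) (hδ : δ = η / (2 * d))
    (s : ℕ → ℕ) (hs0 : s 0 = 0) (n : ℕ) (hsn : ∀ i, ∑ i' ∈ range i, s i' ≤ n)
    (hs1 : ∀ i, ∑ i' ∈ range i, (s i' : ℝ) * ((d : ℝ) ^ i')⁻¹ ≤ 1)
    (hsL : ∃ L, ∑ i' ∈ range L, (s i' : ℝ) * ((d : ℝ) ^ i')⁻¹ = 1)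
    (m r : ℕ) (hr : 2 * n / (η * (d : ℝ) ^ m) ≤ r)
    (hdr : 4 * n * d / (η * (d : ℝ) ^ m) ^ 2 ≤ δ) :
    ∃ (a : ℕ → Fin d → ℕ) (w : Fin d → ℝ), (∀ j, 0 < w j) ∧ w o = 1 ∧ ∑ j, w j ≤ 1 + lam * (1 - p) ∧
      (∀ i, ∑ j, a i j = s i) ∧ (∀ i, m + 1 + r < i → ∀ j, j ≠ o → a i j = 0) ∧
      (∀ j, j ≠ o →
        ∑ i ∈ range (m + 1 + r + 1), (a i j : ℝ) * ((d : ℝ) ^ i)⁻¹ = (d : ℝ)⁻¹) ∧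
      (lam * δ) ^ (d * d ^ m) * ((((n : ℝ) + 1) ^ d)⁻¹) ^ r ≤
        ∏ i ∈ range (m + 1 + r + 1),
          ((Nat.multinomial univ (a i) : ℝ) * ∏ j, w j ^ a i j) := by
  have hd0 : (0 : ℝ) < d := by positivity
  have hd2 : (2 : ℝ) ≤ d := by exact_mod_cast hd
  have hdinv : (d : ℝ)⁻¹ ≤ 1 / 2 := by
    rw [inv_eq_one_div]; exact one_div_le_one_div_of_le two_pos hd2
  have hp0 : 0 < p := by rw [hp]; linarith
  have hp1 : p < 1 := by rw [hp]; linarith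
  have hδ0 : 0 < δ := by rw [hδ]; positivity
  have hdδ : d * δ = η / 2 := by rw [hδ]; field_simp
  have hδ1 : δ ≤ 1 := by nlinarith
  have hlam0 : 0 < lam := by rw [hlam]; exact Real.exp_pos _
  have hlam1 : lam ≤ 1 := by
    rw [hlam, Real.exp_le_one_iff]
    exact div_nonpos_of_nonpos_of_nonneg
      (mul_nonpos_of_nonneg_of_nonpos hp0.le (Real.log_nonpos hp0.le hp1.le)) (by linarith)
  have hx0 : 0 < lam * δ := by positivity
  have hx1 : lam * δ ≤ 1 := mul_le_one₀ hlam1 hδ0.le hδ1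
  have hinv : 0 < (((n : ℝ) + 1) ^ d)⁻¹ := by positivity
  have hinv1 : (((n : ℝ) + 1) ^ d)⁻¹ ≤ 1 :=
    inv_le_one_of_one_le₀ (one_le_pow₀ (by linarith [(Nat.cast_nonneg n : (0 : ℝ) ≤ n)]))
  have hcard : ((univ.erase o).card : ℝ) = d - 1 := by
    rw [card_erase_of_mem (mem_univ o), card_univ, Fintype.card_fin, Nat.cast_sub (by omega)]
    simp
  rcases exists_greedy_filling hd o s hs0 m with ⟨a, h1, h2, h3⟩ | ⟨a, R, h1, h2, h3⟩
  · set w : Fin d → ℝ := fun j => if j = o then 1 else lam * δ with hw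
    have hwo : w o = 1 := if_pos rfl
    have hwj : ∀ j, j ≠ o → w j = lam * δ := fun j hj => if_neg hj
    refine ⟨a, w, fun j => ?_, hwo, ?_, h1, fun i hi => h2 i (by omega), fun j hj => ?_, ?_⟩
    · rw [hw]; dsimp only; split_ifs <;> positivity
    · rw [← add_sum_erase univ _ (mem_univ o), hwo,
        sum_congr rfl fun j hj => hwj j (ne_of_mem_erase hj), sum_const, nsmul_eq_mul, hcard]
      have : (d - 1) * δ ≤ 1 - p := by rw [hp]; nlinarith
      nlinarith
    · rw [← h3 j hj]
      refine (sum_subset (range_subset_range.2 (by omega)) fun i _ hi => ?_).symm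
      rw [h2 i (by simpa using hi) j hj]; simp
    · have hA := pow_le_prod_multinomial_mul_prod hd o a w hx0 hx1 hwo
        (fun j hj => (hwj j hj).ge) m (fun j hj => (h3 j hj).le)
      rw [← prod_range_mul_prod_Ico _ (by omega : m + 1 ≤ m + 1 + r + 1)]
      have hB : 1 ≤ ∏ i ∈ Ico (m + 1) (m + 1 + r + 1),
          ((Nat.multinomial univ (a i) : ℝ) * ∏ j, w j ^ a i j) :=
        Finset.one_le_prod fun i hi => one_le_multinomial_mul_prod_of_eq_zero o _ w hwo
          (h2 i (by have := mem_Ico.1 hi; omega))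
      exact mul_le_mul hA ((pow_le_one₀ hinv.le hinv1).trans hB) (by positivity)
        ((pow_pos hx0 _).le.trans hA)
  · set P : ℕ → ℝ := fun i => ∑ i' ∈ range i, (s i' : ℝ) * ((d : ℝ) ^ i')⁻¹ with hP
    have hPs : ∀ i, P (i + 1) = P i + s i * ((d : ℝ) ^ i)⁻¹ := fun i => sum_range_succ _ _
    have hPmono : Monotone P := monotone_nat_of_le_succ fun i => by
      rw [hPs]; have : 0 ≤ (s i : ℝ) * ((d : ℝ) ^ i)⁻¹ := by positivity
      linarith
    set T : ℕ → ℝ := fun i => (d : ℝ) ^ i * (1 - P i) with hT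
    have hTs : ∀ i, T (i + 1) = d * (T i - s i) := fun i => by
      simp only [hT]
      rw [hPs, pow_succ]
      field_simp
      ring
    have hT0 : ∀ i, 0 ≤ T i := fun i => mul_nonneg (by positivity) (sub_nonneg.2 (hs1 i))
    set M : ℝ := (d : ℝ) ^ m with hM
    have hM0 : 0 < M := by positivity
    set K : ℝ := η * M with hK
    have hK0 : 0 < K := by positivity
    have hKM : K ≤ M := by rw [hK]; nlinarith
    set X : ℝ := ∑ j ∈ univ.erase o, (R j : ℝ) with hX
    have hX0 : 0 ≤ X := sum_nonneg fun j _ => Nat.cast_nonneg _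
    have hpow : (d : ℝ) ^ (m + 1) = d * M := by rw [hM, pow_succ]; ring
    have hRM : ∀ j, j ≠ o → (R j : ℝ) ≤ M := fun j hj => by
      have h := h3 j hj
      have h0 : 0 ≤ ∑ i ∈ range (m + 1), (a i j : ℝ) * ((d : ℝ) ^ i)⁻¹ :=
        sum_nonneg fun i _ => by positivity
      have h4 : (R j : ℝ) * ((d : ℝ) ^ (m + 1))⁻¹ ≤ (d : ℝ)⁻¹ := by linarith
      rw [← div_eq_mul_inv, div_le_iff₀ (by positivity), hpow] at h4
      calc (R j : ℝ) ≤ _ := h4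
        _ = M := by field_simp
    have hXM : X ≤ (d - 1) * M := by
      refine (sum_le_sum fun j hj => hRM j (ne_of_mem_erase hj)).trans ?_
      rw [sum_const, nsmul_eq_mul, hcard]
    have hTi : T (m + 1) = M + X := by
      have h : P (m + 1) + X * ((d : ℝ) ^ (m + 1))⁻¹ = (d - 1) * (d : ℝ)⁻¹ := by
        have h4 := sum_congr (rfl : univ.erase o = univ.erase o)
          fun j hj => h3 j (ne_of_mem_erase hj)
        rw [sum_const, nsmul_eq_mul, hcard, sum_add_distrib, ← sum_mul, sum_comm] at h4
        rw [← h4]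
        congr 1
        refine sum_congr rfl fun i hi => ?_
        rw [← sum_mul, ← h1 i (by have := mem_range.1 hi; omega),
          ← add_sum_erase univ _ (mem_univ o), h2 i]
        simp
      have h5 : P (m + 1) = (d - 1) * (d : ℝ)⁻¹ - X * ((d : ℝ) ^ (m + 1))⁻¹ := by linarith
      simp only [hT]
      rw [h5, hpow]
      field_simp
      ring
    have hex : ∃ t, m + 1 ≤ t ∧ T t < K := by
      obtain ⟨L, hL⟩ := hsL
      refine ⟨max L (m + 1), le_max_right _ _, ?_⟩
      have : P (max L (m + 1)) = 1 :=
        le_antisymm (hs1 _) (hL.symm.le.trans (hPmono (le_max_left _ _)))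
      simp only [hT]
      rw [this]; simpa using hK0
    obtain ⟨t, ⟨hmt, hTt⟩, hmin⟩ : ∃ t, (m + 1 ≤ t ∧ T t < K) ∧ ∀ i < t, ¬ (m + 1 ≤ i ∧ T i < K) :=
      ⟨Nat.find hex, Nat.find_spec hex, fun i hi => Nat.find_min hex hi⟩
    have hTK : ∀ i, m + 1 ≤ i → i < t → K ≤ T i := fun i hi hit => by
      by_contra h
      exact hmin i hit ⟨hi, not_le.1 h⟩
    have hmt' : m + 1 < t := lt_of_le_of_ne hmt fun h => by
      rw [← h, hTi] at hTt; linarith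
    have hlen : ∀ k, m + 1 + k ≤ t →
        k * (K / 2) + (T (m + 1) - T (m + 1 + k)) / d ≤
          ∑ i ∈ range (m + 1 + k), (s i : ℝ) := fun k => by
      induction k with
      | zero => intro _; simp only [Nat.cast_zero, add_zero, sub_self, zero_mul, zero_div]; positivity
      | succ k ih =>
        intro hk
        have h := ih (by omega)
        have hT1 := hTK (m + 1 + k) (by omega) (by omega)
        rw [← add_assoc, sum_range_succ, hTs (m + 1 + k)]
        have e : (T (m + 1) - d * (T (m + 1 + k) - s (m + 1 + k))) / d =
            (T (m + 1) - T (m + 1 + k)) / d + T (m + 1 + k) * (d : ℝ)⁻¹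
              - T (m + 1 + k) + s (m + 1 + k) := by field_simp; ring
        rw [e]
        push_cast
        nlinarith [hT0 (m + 1 + k)]
    have hk2 : ((t - (m + 1) : ℕ) : ℝ) ≤ 2 * n / K := by
      have h := hlen (t - (m + 1)) (by omega)
      rw [Nat.add_sub_cancel' hmt] at h
      have h5 : 0 ≤ (T (m + 1) - T t) / d := div_nonneg (by rw [hTi]; linarith) hd0.le
      have h6 : ∑ i ∈ range t, (s i : ℝ) ≤ n := by exact_mod_cast hsn t
      rw [le_div_iff₀ hK0]
      linarith
    have hkr : t - (m + 1) ≤ r := by exact_mod_cast hk2.trans hr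
    set U : ℕ → ℝ := fun i => T i - T t * ((d : ℝ) ^ i / (d : ℝ) ^ t) with hU
    have hUt : U t = 0 := by simp only [hU]; rw [div_self (by positivity)]; ring
    have hUrec : ∀ i < t, U (i + 1) = d * (U i - s i) := fun i _ => by
      simp only [hU]; rw [hTs, pow_succ]; ring
    have hTU : ∀ i < t, T i - K / 2 ≤ U i := fun i hi => by
      have h4 : (d : ℝ) ^ i / (d : ℝ) ^ t ≤ 1 / 2 := by
        rw [div_le_div_iff₀ (by positivity) two_pos]
        calc (d : ℝ) ^ i * 2 ≤ (d : ℝ) ^ i * d := by gcongr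
          _ = (d : ℝ) ^ (i + 1) := (pow_succ _ _).symm
          _ ≤ 1 * (d : ℝ) ^ t := by
            rw [one_mul]; exact pow_le_pow_right₀ (by linarith) hi
      have h5 := mul_le_mul hTt.le h4 (by positivity) hK0.le
      simp only [hU]; linarith
    have hUK : ∀ i, m + 1 ≤ i → i < t → K / 2 ≤ U i := fun i hi hit => by
      linarith [hTU i hit, hTK i hi hit]
    have hU0 : 0 < U (m + 1) := (half_pos hK0).trans_le (hUK _ le_rfl hmt')
    set v : Fin d → ℝ := fun j => R j / U (m + 1) + δ with hv
    have hvδ : ∀ j, δ ≤ v j := fun j => by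
      simp only [hv]; linarith [div_nonneg (Nat.cast_nonneg (R j)) hU0.le]
    have hvsum : ∑ j ∈ univ.erase o, v j ≤ 1 - p := by
      simp only [hv]
      rw [sum_add_distrib, sum_const, nsmul_eq_mul, hcard, ← sum_div]
      have h4 : X / U (m + 1) ≤ 1 - (d : ℝ)⁻¹ + η / 2 := by
        rw [div_le_iff₀ hU0]
        have h5 := hTU (m + 1) hmt'
        rw [hTi] at h5
        have h6 : 0 ≤ 1 - (d : ℝ)⁻¹ + η / 2 := by linarith
        refine le_trans ?_ (mul_le_mul_of_nonneg_left h5 h6)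
        have h7 := le_chord_mul_of_le (inv_mul_cancel₀ hd0.ne') (by linarith) hη hηd hM0 hXM
        rw [hK]
        linarith
      have h5 : ((d : ℝ) - 1) * δ = d * δ - δ := by ring
      rw [hp]
      linarith
    have hdrift : ((t - (m + 1) : ℕ) : ℝ) * (d / (K / 2)) ≤ δ := by
      refine le_trans ?_ hdr
      calc ((t - (m + 1) : ℕ) : ℝ) * (d / (K / 2)) ≤ 2 * n / K * (d / (K / 2)) := by gcongr
        _ = _ := by rw [hK]; field_simp; ring
    obtain ⟨a', ha1, ha2⟩ := exists_proportional_filling (by omega : 1 ≤ d) o s U t hUrec hUt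
      (half_pos hK0) v hp0.le hvsum (t - (m + 1)) (m + 1) (by omega) hUK R (fun j _ => by
        have h4 : (R j : ℝ) / U (m + 1) ≤ v j - ((t - (m + 1) : ℕ) : ℝ) * (d / (K / 2)) := by
          simp only [hv]; linarith
        rwa [div_le_iff₀ hU0] at h4)
    set w : Fin d → ℝ := fun j => if j = o then 1 else lam * v j with hw
    have hwo : w o = 1 := if_pos rfl
    have hwj : ∀ j, j ≠ o → w j = lam * v j := fun j hj => if_neg hj
    set A : ℕ → Fin d → ℕ := fun i j =>
      if i < m + 1 then a i j else if i < t then a' i j else if j = o then s i else 0 with hA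
    have hA1 : ∀ i, i < m + 1 → A i = a i := fun i hi => funext fun j => if_pos hi
    have hA2 : ∀ i, m + 1 ≤ i → i < t → A i = a' i := fun i hi hit => funext fun j => by
      simp only [hA]; rw [if_neg (by omega), if_pos hit]
    have hA3 : ∀ i, t ≤ i → ∀ j, A i j = if j = o then s i else 0 := fun i hi j => by
      simp only [hA]; rw [if_neg (by omega), if_neg (by omega)]
    have hA4 : ∀ i, t ≤ i → ∀ j, j ≠ o → A i j = 0 := fun i hi j hj => by
      rw [hA3 i hi, if_neg hj]
    refine ⟨A, w, fun j => ?_, hwo, ?_, fun i => ?_, fun i hi => hA4 i (by omega),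
      fun j hj => ?_, ?_⟩
    · rw [hw]; dsimp only
      have := hδ0.trans_le (hvδ j)
      split_ifs <;> positivity
    · rw [← add_sum_erase univ _ (mem_univ o), hwo,
        sum_congr rfl fun j hj => hwj j (ne_of_mem_erase hj), ← mul_sum]
      gcongr
    · rcases (show i < m + 1 ∨ (m + 1 ≤ i ∧ i < t) ∨ t ≤ i by omega) with h | h | h
      · rw [hA1 i h]; exact h1 i (by omega)
      · rw [hA2 i h.1 h.2]; exact (ha1 i h.1 h.2).1
      · rw [sum_congr rfl fun j _ => hA3 i h j]; simp
    · have e1 : ∑ i ∈ range (m + 1 + r + 1), (A i j : ℝ) * ((d : ℝ) ^ i)⁻¹ =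
          ∑ i ∈ range t, (A i j : ℝ) * ((d : ℝ) ^ i)⁻¹ := by
        refine (sum_subset (range_subset_range.2 (by omega)) fun i _ hi => ?_).symm
        rw [hA4 i (by simpa using hi) j hj]; simp
      rw [e1, ← sum_range_add_sum_Ico _ hmt, ← h3 j hj, ← ha2 j hj]
      congr 1
      · exact sum_congr rfl fun i hi => by rw [hA1 i (mem_range.1 hi)]
      · exact sum_congr rfl fun i hi => by rw [hA2 i (mem_Ico.1 hi).1 (mem_Ico.1 hi).2]
    · rw [← prod_range_mul_prod_Ico _ (by omega : m + 1 ≤ m + 1 + r + 1),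
        ← prod_Ico_consecutive _ hmt (by omega : t ≤ m + 1 + r + 1)]
      have hX1 := pow_le_prod_multinomial_mul_prod hd o A w hx0 hx1 hwo
        (fun j hj => by rw [hwj j hj]; exact mul_le_mul_of_nonneg_left (hvδ j) hlam0.le) m
        (fun j hj => by
          rw [sum_congr rfl fun i hi => by rw [hA1 i (mem_range.1 hi)], ← h3 j hj]
          have : 0 ≤ (R j : ℝ) * ((d : ℝ) ^ (m + 1))⁻¹ := by positivity
          linarith)
      have hX3 : 1 ≤ ∏ i ∈ Ico t (m + 1 + r + 1),
          ((Nat.multinomial univ (A i) : ℝ) * ∏ j, w j ^ A i j) :=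
        Finset.one_le_prod fun i hi => one_le_multinomial_mul_prod_of_eq_zero o _ w hwo
          (hA4 i (mem_Ico.1 hi).1)
      have hX2 : ((((n : ℝ) + 1) ^ d)⁻¹) ^ r ≤ ∏ i ∈ Ico (m + 1) t,
          ((Nat.multinomial univ (A i) : ℝ) * ∏ j, w j ^ A i j) := by
        refine (pow_le_pow_of_le_one hinv.le hinv1 hkr).trans ?_
        rw [← Nat.card_Ico, ← prod_const]
        refine prod_le_prod (fun _ _ => hinv.le) fun i hi => ?_
        obtain ⟨hi1, hi2⟩ := mem_Ico.1 hi
        obtain ⟨g1, g2, g3⟩ := ha1 i hi1 hi2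
        rw [hA2 i hi1 hi2]
        have h4 := one_le_mul_multinomial_mul_prod o hp0 hp1 (a' i) (s i) g1 v w
          (fun j _ => hδ0.trans_le (hvδ j)) g2 g3 hwo (fun j hj => by rw [hwj j hj, hlam])
        have hsi : (s i : ℝ) ≤ n := by
          have : s i ≤ n := (single_le_sum (fun _ _ => Nat.zero_le _)
            (self_mem_range_succ i)).trans (hsn (i + 1))
          exact_mod_cast this
        rw [inv_le_iff_one_le_mul₀' (by positivity)]
        refine h4.trans (mul_le_mul_of_nonneg_right (by gcongr) ?_)
        by_contra hneg
        push Not at hneg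
        have := mul_neg_of_pos_of_neg (by positivity : (0 : ℝ) < ((s i : ℝ) + 1) ^ d) hneg
        linarith
      refine mul_le_mul hX1 ?_ (by positivity) ((pow_pos hx0 _).le.trans hX1)
      rw [← mul_one ((((n : ℝ) + 1) ^ d)⁻¹ ^ r)]
      exact mul_le_mul hX2 hX3 zero_le_one ((pow_pos hinv _).le.trans hX2)

section
variable {α ι κ : Type*} [Fintype α] [DecidableEq α] [Fintype ι] [DecidableEq ι] [Fintype κ]
  [DecidableEq κ]

theorem prod_multinomial_le_card_fiber (code : α → κ) (a : κ → ι → ℕ)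
    (ha : ∀ i, ∑ j, a i j = #{x | code x = i}) :
    ∏ i, Nat.multinomial univ (a i) ≤
      #{f : α → ι | ∀ i j, #{x | code x = i ∧ f x = j} = a i j} := by
  calc ∏ i, Nat.multinomial univ (a i)
      ≤ ∏ i, #{g : {x // code x = i} → ι | ∀ j, #{x | g x = j} = a i j} :=
        prod_le_prod' fun i _ => multinomial_le_card_fiber _ (by
          rw [ha, Fintype.card_subtype])
    _ = #(Fintype.piFinset fun i =>
          ({g | ∀ j, #{x | g x = j} = a i j} : Finset ({x // code x = i} → ι))) :=
        (Fintype.card_piFinset _).symm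
    _ ≤ _ := by
      refine card_le_card_of_injOn (fun g x => g (code x) ⟨x, rfl⟩) (fun g hg => ?_) ?_
      · simp only [coe_filter, Set.mem_ofPred_eq, mem_univ, true_and]
        simp only [mem_coe, Fintype.mem_piFinset, mem_filter, mem_univ, true_and] at hg
        intro i j
        rw [← hg i j]
        symm
        refine card_bij (fun y _ => y.1) ?_ (fun _ _ _ _ h => Subtype.ext h) ?_
        · rintro ⟨y, rfl⟩ hy
          simpa using hy
        · intro x hx
          simp only [mem_filter, mem_univ, true_and] at hx
          obtain ⟨rfl, hx⟩ := hx
          exact ⟨⟨x, rfl⟩, by simpa using hx, rfl⟩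
      · intro g _ g' _ h
        funext i
        funext ⟨x, hx⟩
        subst hx
        exact congrFun h x

theorem card_fiber_mul_prod_pow_le (c : ι → ℕ) (w : ι → ℝ) (hw : ∀ j, 0 < w j) :
    (#{f : α → ι | ∀ j, #{x | f x = j} = c j} : ℝ) * ∏ j, w j ^ c j ≤
      (∑ j, w j) ^ Fintype.card α := by
  have h := prod_univ_sum (fun _ : α => (univ : Finset ι)) (fun _ j => w j)
  rw [prod_const, card_univ] at h
  rw [h, ← nsmul_eq_mul, ← sum_const]
  calc _ = ∑ f ∈ ({f : α → ι | ∀ j, #{x | f x = j} = c j} : Finset (α → ι)), ∏ x, w (f x) := by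
        refine sum_congr rfl fun f hf => ?_
        simp only [mem_filter, mem_univ, true_and] at hf
        rw [prod_comp, ← prod_subset (subset_univ (univ.image f)) ?_]
        · exact prod_congr rfl fun j _ => by rw [hf]
        · intro j _ hj
          rw [← hf j, card_eq_zero.2, pow_zero]
          refine filter_eq_empty_iff.2 fun x _ hx => hj ?_
          exact mem_image.2 ⟨x, mem_univ _, hx⟩
    _ ≤ _ := by
        refine sum_le_sum_of_subset_of_nonneg (fun f _ => ?_)
          fun f _ _ => prod_nonneg fun x _ => (hw _).le
        exact Fintype.mem_piFinset.2 fun _ => mem_univ _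

theorem div_pow_mul_card_le_card (code : α → κ) (a : κ → ι → ℕ)
    (ha : ∀ i, ∑ j, a i j = #{x | code x = i}) (w : ι → ℝ) (hw : ∀ j, 0 < w j) {y Z : ℝ}
    (hZ0 : 0 < Z) (hZ : ∑ j, w j ≤ Z)
    (hy : y ≤ ∏ i, ((Nat.multinomial univ (a i) : ℝ) * ∏ j, w j ^ a i j)) :
    y / Z ^ Fintype.card α * #{f : α → ι | ∀ j, #{x | f x = j} = ∑ i, a i j} ≤
      #{f : α → ι | ∀ i j, #{x | code x = i ∧ f x = j} = a i j} := by
  set G := (#{f : α → ι | ∀ i j, #{x | code x = i ∧ f x = j} = a i j} : ℝ)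
  set Y := (#{f : α → ι | ∀ j, #{x | f x = j} = ∑ i, a i j} : ℝ)
  have h1 : Y * ∏ j, w j ^ (∑ i, a i j) ≤ Z ^ Fintype.card α :=
    (card_fiber_mul_prod_pow_le _ w hw).trans
      (pow_le_pow_left₀ (sum_nonneg fun j _ => (hw j).le) hZ _)
  have h2 : ∏ i, ∏ j, w j ^ a i j = ∏ j, w j ^ (∑ i, a i j) := by
    rw [prod_comm]; exact prod_congr rfl fun j _ => prod_pow_eq_pow_sum _ _ _
  have h3 : ((∏ i, Nat.multinomial univ (a i) : ℕ) : ℝ) ≤ G :=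
    Nat.cast_le.2 (prod_multinomial_le_card_fiber code a ha)
  rw [prod_mul_distrib, h2] at hy
  have hW : 0 < ∏ j, w j ^ (∑ i, a i j) := prod_pos fun j _ => pow_pos (hw j) _
  push_cast at h3
  rw [div_mul_eq_mul_div, div_le_iff₀ (by positivity)]
  calc y * Y ≤ (G * ∏ j, w j ^ (∑ i, a i j)) * Y :=
        mul_le_mul_of_nonneg_right (hy.trans (mul_le_mul_of_nonneg_right h3 hW.le))
          (Nat.cast_nonneg _)
    _ = G * (Y * ∏ j, w j ^ (∑ i, a i j)) := by ring
    _ ≤ _ := mul_le_mul_of_nonneg_left h1 (Nat.cast_nonneg _)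

end

/-- The assignments for which all parts other than `o` have mass `1 / d`, where an element of
code `i ≥ 1` has mass `d⁻ⁱ` and no element of code `0` is allowed. -/
noncomputable def divAssignments (d n b : ℕ) (o : Fin d) (code : Fin n → Fin (b + 1)) :
    Finset (Fin n → Fin d) :=
  open Classical in
  {f | ∀ j, j ≠ o → (∀ x, f x = j → (code x : ℕ) ≠ 0) ∧
    ∑ x with f x = j, ((d : ℝ) ^ (code x : ℕ))⁻¹ = (d : ℝ)⁻¹}

theorem memDiv_of_mem_divAssignments {d n b : ℕ} (hd : 2 ≤ d) (o : Fin d) (μ : Fin n → ℝ)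
    (hμ : ∑ x, μ x = 1) (code : Fin n → Fin (b + 1))
    (hcode : ∀ x, (code x : ℕ) ≠ 0 → μ x = ((d : ℝ) ^ (code x : ℕ))⁻¹) (f : Fin n → Fin d)
    (hf : f ∈ divAssignments d n b o code) : MemDiv d n μ fun j => univ.filter (f · = j) := by
  have hd0 : (d : ℝ) ≠ 0 := by positivity
  simp only [divAssignments, mem_filter, mem_univ, true_and] at hf
  have h1 : ∀ j, j ≠ o → ∑ x with f x = j, μ x = (d : ℝ)⁻¹ := fun j hj => by
    rw [← (hf j hj).2]
    refine sum_congr rfl fun x hx => hcode x ((hf j hj).1 x (by simpa using hx))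
  refine ⟨⟨fun j j' hjj => ?_, ?_⟩, fun j => ?_⟩
  · refine disjoint_filter.2 fun x _ h h' => hjj (h.symm.trans h')
  · ext x; simp
  · rw [one_div]
    by_cases hj : j = o
    · subst hj
      have h2 := sum_fiberwise univ f μ
      rw [hμ, ← add_sum_erase univ _ (mem_univ j),
        sum_congr rfl fun j' hj' => h1 j' (ne_of_mem_erase hj'), sum_const, nsmul_eq_mul,
        card_erase_of_mem (mem_univ j), card_univ, Fintype.card_fin, Nat.cast_sub (by omega)] at h2
      push_cast at h2
      have h3 : ((d : ℝ) - 1) * (d : ℝ)⁻¹ = 1 - (d : ℝ)⁻¹ := by field_simp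
      rw [h3] at h2
      linarith
    · exact h1 j hj

theorem exists_isHitter_card_le {d n b : ℕ} (hd : 2 ≤ d) (o : Fin d) {ρ : ℝ} (hρ : 0 < ρ)
    (H : ∀ μ : Fin n → ℝ, IsDadicDist d n μ → ∃ code : Fin n → Fin (b + 1),
      (∀ x, (code x : ℕ) ≠ 0 → μ x = ((d : ℝ) ^ (code x : ℕ))⁻¹) ∧
      ∃ c : Fin d → ℕ, (∃ f : Fin n → Fin d, ∀ j, #{x | f x = j} = c j) ∧
        ρ * #{f : Fin n → Fin d | ∀ j, #{x | f x = j} = c j} ≤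
          #(divAssignments d n b o code ∩
            ({f | ∀ j, #{x | f x = j} = c j} : Finset (Fin n → Fin d)))) :
    ∃ Q, IsHitter d n Q ∧
      (#Q : ℝ) ≤ ((n : ℝ) + 1) ^ d * (n * Real.log ((b : ℝ) + 1) / ρ + 1) := by
  classical
  set Y : (Fin d → Fin (n + 1)) → Finset (Fin n → Fin d) :=
    fun c => {f : Fin n → Fin d | ∀ j, #{x | f x = j} = (c j : ℕ)} with hY
  have hb0 : 0 ≤ Real.log ((b : ℝ) + 1) := Real.log_nonneg (by
    linarith [(Nat.cast_nonneg b : (0 : ℝ) ≤ b)])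
  have hQ : ∀ c, ∃ Q : Finset (Fin n → Fin d),
      (#Q : ℝ) ≤ n * Real.log ((b : ℝ) + 1) / ρ + 1 ∧ ((Y c).Nonempty →
        ∀ code : Fin n → Fin (b + 1), ρ * #(Y c) ≤ #(divAssignments d n b o code ∩ Y c) →
          ∃ f ∈ Q, f ∈ divAssignments d n b o code) := fun c => by
    by_cases hne : (Y c).Nonempty
    · obtain ⟨Q, -, h1, h2⟩ := exists_hitting_set (Y c) hne
        (fun i : {code : Fin n → Fin (b + 1) //
          ρ * #(Y c) ≤ #(divAssignments d n b o code ∩ Y c)} => divAssignments d n b o i.1 ∩ Y c)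
        (fun _ => inter_subset_right) ρ hρ fun i => i.2
      refine ⟨Q, h1.trans ?_, fun _ code hcode => ?_⟩
      · gcongr
        set I := {code : Fin n → Fin (b + 1) //
          ρ * #(Y c) ≤ #(divAssignments d n b o code ∩ Y c)}
        have hI : Fintype.card I ≤ (b + 1) ^ n := by
          refine (Fintype.card_subtype_le _).trans ?_
          simp
        rcases Nat.eq_zero_or_pos (Fintype.card I) with h0 | h0
        · rw [h0]; simp only [Nat.cast_zero, Real.log_zero]; positivity
        · rw [← Real.log_pow]
          exact Real.log_le_log (by exact_mod_cast h0) (by exact_mod_cast hI)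
      · obtain ⟨f, hf, hf'⟩ := h2 ⟨code, hcode⟩
        exact ⟨f, hf, (mem_inter.1 hf').1⟩
    · exact ⟨∅, by simp only [card_empty, Nat.cast_zero]; positivity, fun h => absurd h hne⟩
  choose Q hQ1 hQ2 using hQ
  refine ⟨(univ.biUnion Q).image fun f j => univ.filter (f · = j), ⟨fun S hS => ?_,
    fun μ hμ _ => ?_⟩, ?_⟩
  · obtain ⟨f, -, rfl⟩ := mem_image.1 hS
    refine ⟨fun j j' hjj => disjoint_filter.2 fun x _ h h' => hjj (h.symm.trans h'), ?_⟩
    ext x; simp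
  · obtain ⟨code, h1, c, ⟨f₀, hf₀⟩, h2⟩ := H μ hμ
    have hc : ∀ j, c j < n + 1 := fun j => by
      rw [← hf₀ j, Nat.lt_succ_iff]
      exact (card_le_univ _).trans (by simp)
    obtain ⟨f, hf, hf'⟩ := hQ2 (fun j => ⟨c j, hc j⟩) ⟨f₀, by simpa [hY] using hf₀⟩ code h2
    exact ⟨_, mem_image_of_mem _ (mem_biUnion.2 ⟨_, mem_univ _, hf⟩),
      memDiv_of_mem_divAssignments hd o μ hμ.2.1 code h1 f hf'⟩
  · calc _ ≤ ((univ.biUnion Q).card : ℝ) := by exact_mod_cast card_image_le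
      _ ≤ ∑ c, (#(Q c) : ℝ) := by exact_mod_cast card_biUnion_le
      _ ≤ ∑ c : Fin d → Fin (n + 1), (n * Real.log ((b : ℝ) + 1) / ρ + 1) :=
        sum_le_sum fun c _ => hQ1 c
      _ = _ := by simp [mul_add]

set_option maxHeartbeats 1000000 in
theorem exists_dense_divAssignments {d n : ℕ} (hd : 2 ≤ d) {η : ℝ} (hη : 0 < η)
    (hηd : η < (d : ℝ)⁻¹) {p lam δ : ℝ} (hp : p = (d : ℝ)⁻¹ - η)
    (hlam : lam = Real.exp (p * Real.log p / (1 - p))) (hδ : δ = η / (2 * d))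
    (m r : ℕ) (hr : 2 * n / (η * (d : ℝ) ^ m) ≤ r)
    (hdr : 4 * n * d / (η * (d : ℝ) ^ m) ^ 2 ≤ δ) {b : ℕ} (hb : b = m + 1 + r) (o : Fin d) {ρ : ℝ}
    (hρ : ρ = (lam * δ) ^ (d * d ^ m) * ((((n : ℝ) + 1) ^ d)⁻¹) ^ r / (1 + lam * (1 - p)) ^ n)
    (hZ0 : 0 < 1 + lam * (1 - p)) (μ : Fin n → ℝ) (hμ : IsDadicDist d n μ) :
    ∃ code : Fin n → Fin (b + 1),
      (∀ x, (code x : ℕ) ≠ 0 → μ x = ((d : ℝ) ^ (code x : ℕ))⁻¹) ∧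
      ∃ c : Fin d → ℕ, (∃ f : Fin n → Fin d, ∀ j, #{x | f x = j} = c j) ∧
        ρ * #{f : Fin n → Fin d | ∀ j, #{x | f x = j} = c j} ≤
          #(divAssignments d n b o code ∩
            ({f | ∀ j, #{x | f x = j} = c j} : Finset (Fin n → Fin d))) := by
  obtain ⟨hμ0, hμ1, hμ2⟩ := hμ
  have hlev : ∀ x, ∃ l : ℕ, (l = 0 ∧ μ x = 0) ∨ (l ≠ 0 ∧ μ x = ((d : ℝ) ^ l)⁻¹) := fun x => by
    rcases hμ2 x with h | ⟨l, hl, h⟩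
    · exact ⟨0, Or.inl ⟨rfl, h⟩⟩
    · exact ⟨l, Or.inr ⟨by omega, h⟩⟩
  choose lev hlev using hlev
  have hlev' : ∀ x, lev x ≠ 0 → μ x = ((d : ℝ) ^ lev x)⁻¹ := fun x hx => by
    rcases hlev x with h | h
    · exact absurd h.1 hx
    · exact h.2
  have hlev0 : ∀ x, lev x = 0 → μ x = 0 := fun x hx => by
    rcases hlev x with h | h
    · exact h.2
    · exact absurd hx h.1
  set s : ℕ → ℕ := fun i => if i = 0 then 0 else #{x | lev x = i} with hs
  have hs0 : s 0 = 0 := if_pos rfl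
  have hs' : ∀ i, i ≠ 0 → s i = #{x | lev x = i} := fun i hi => if_neg hi
  have hmass : ∀ i, ∑ i' ∈ range i, (s i' : ℝ) * ((d : ℝ) ^ i')⁻¹ = ∑ x with lev x < i, μ x := by
    intro i
    have h := sum_fiberwise_of_maps_to (s := ({x | lev x < i} : Finset (Fin n))) (t := range i)
      (g := lev) (f := μ) fun x hx => by simpa using hx
    rw [← h]
    refine sum_congr rfl fun i' hi' => ?_
    have h2 : ({x | lev x < i} : Finset (Fin n)).filter (lev · = i') = univ.filter (lev · = i') := by
      ext x
      simp only [mem_filter, mem_univ, true_and, and_iff_right_iff_imp]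
      rintro rfl; simpa using hi'
    rw [h2]
    by_cases hi0 : i' = 0
    · rw [hi0, hs0, sum_eq_zero fun x hx => hlev0 x (by simpa using hx)]; simp
    · rw [hs' _ hi0, ← nsmul_eq_mul, ← sum_const]
      refine sum_congr rfl fun x hx => ?_
      have hx' : lev x = i' := by simpa using hx
      rw [hlev' x (by omega), hx']
  obtain ⟨a, w, hw0, hwo, hwZ, ha1, ha2, ha3, ha4⟩ := exists_level_counts hd o hη hηd hp hlam hδ s
    hs0 n (fun i => by
      have h := card_eq_sum_card_fiberwise (s := ({x | lev x < i} : Finset (Fin n)))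
        (t := range i) (f := lev) fun x hx => by simpa using hx
      have h1 : #({x | lev x < i} : Finset (Fin n)) ≤ n := (card_le_univ _).trans (by simp)
      refine le_trans ?_ h1
      rw [h]
      refine sum_le_sum fun i' hi' => ?_
      by_cases hi0 : i' = 0
      · rw [hi0, hs0]; exact Nat.zero_le _
      · rw [hs' _ hi0]
        refine card_le_card fun x hx => ?_
        simp only [mem_filter, mem_univ, true_and] at hx ⊢
        exact ⟨by rw [hx]; simpa using hi', hx⟩)
    (fun i => by
      rw [hmass, ← hμ1]
      exact sum_le_sum_of_subset_of_nonneg (subset_univ _) fun x _ _ => hμ0 x)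
    ⟨(univ.sup lev) + 1, by
      rw [hmass, ← hμ1, filter_true_of_mem]
      intro x _
      exact Nat.lt_succ_of_le (le_sup (mem_univ x))⟩ m r hr hdr
  rw [← hb] at ha2 ha3 ha4
  set code : Fin n → Fin (b + 1) := fun x =>
    if h : lev x < b + 1 then ⟨lev x, h⟩ else 0 with hcode
  have hcode1 : ∀ x, (code x : ℕ) ≠ 0 → (code x : ℕ) = lev x := fun x hx => by
    by_cases h : lev x < b + 1
    · simp only [hcode]; rw [dif_pos h]
    · exact absurd (by simp only [hcode]; rw [dif_neg h]; rfl) hx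
  set A : Fin (b + 1) → Fin d → ℕ := fun i j =>
    if (i : ℕ) = 0 then (if j = o then #{x | code x = i} else 0) else a i j with hA
  have hA0 : ∀ i : Fin (b + 1), (i : ℕ) = 0 → ∀ j, A i j = if j = o then #{x | code x = i} else 0 :=
    fun i hi j => if_pos hi
  have hA1 : ∀ i : Fin (b + 1), (i : ℕ) ≠ 0 → A i = a i := fun i hi => funext fun j => if_neg hi
  have hsum : ∀ i, ∑ j, A i j = #{x | code x = i} := fun i => by
    by_cases hi : (i : ℕ) = 0
    · rw [sum_congr rfl fun j _ => hA0 i hi j]; simp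
    · rw [hA1 i hi, ha1, hs' _ hi]
      congr 1
      ext x
      simp only [mem_filter, mem_univ, true_and]
      constructor
      · intro h
        simp only [hcode]
        rw [dif_pos (by rw [h]; exact i.2)]
        exact Fin.ext h
      · intro h
        rw [← hcode1 x (by rwa [h]), h]
  have ha0 : ∀ j, a 0 j = 0 := by
    have := ha1 0
    rw [hs0, sum_eq_zero_iff] at this
    exact fun j => this j (mem_univ j)
  have hle : (lam * δ) ^ (d * d ^ m) * ((((n : ℝ) + 1) ^ d)⁻¹) ^ r ≤
      ∏ i, ((Nat.multinomial univ (A i) : ℝ) * ∏ j, w j ^ A i j) := by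
    refine ha4.trans ?_
    rw [prod_range]
    refine prod_le_prod (fun i _ => mul_nonneg (Nat.cast_nonneg _)
      (prod_nonneg fun j _ => (pow_pos (hw0 j) _).le)) fun i _ => ?_
    by_cases hi : (i : ℕ) = 0
    · refine le_trans (le_of_eq ?_) (one_le_multinomial_mul_prod_of_eq_zero o (A i) w hwo
        fun j hj => by rw [hA0 i hi, if_neg hj])
      have : a i = fun _ => 0 := funext fun j => by rw [hi, ha0]
      rw [this]; simp [Nat.multinomial]
    · rw [hA1 i hi]
  have hdens := div_pow_mul_card_le_card code A hsum w hw0 hZ0 hwZ hle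
  rw [Fintype.card_fin, ← hρ] at hdens
  have hsub : ∀ f : Fin n → Fin d, (∀ i j, #{x | code x = i ∧ f x = j} = A i j) →
      f ∈ divAssignments d n b o code ∧ ∀ j, #{x | f x = j} = ∑ i, A i j := by
    intro f hf
    constructor
    · simp only [divAssignments, mem_filter, mem_univ, true_and]
      intro j hj
      constructor
      · intro x hx hx0
        have h := hf (code x) j
        rw [hA0 _ hx0, if_neg hj, card_eq_zero, filter_eq_empty_iff] at h
        exact h (mem_univ x) ⟨rfl, hx⟩
      · rw [← ha3 j hj, ← sum_fiberwise _ code, sum_range fun i => (a i j : ℝ) * ((d : ℝ) ^ i)⁻¹]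
        refine sum_congr rfl fun i _ => ?_
        have h1 : (a i j : ℝ) = #{x | code x = i ∧ f x = j} := by
          rw [hf]
          by_cases hi : (i : ℕ) = 0
          · rw [hi, ha0, hA0 i hi, if_neg hj]
          · rw [hA1 i hi]
        rw [h1, ← nsmul_eq_mul, ← sum_const, filter_filter]
        refine sum_congr (by ext x; simp [and_comm]) fun x hx => ?_
        have : code x = i := by simp at hx; tauto
        rw [this]
    · intro j
      rw [card_eq_sum_card_fiberwise (f := code) (t := univ) fun _ _ => mem_univ _]
      refine sum_congr rfl fun i _ => ?_
      rw [← hf i j, filter_filter]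
      congr 1
      ext x; simp [and_comm]
  obtain ⟨c, hc⟩ : ∃ c : Fin d → ℕ, ∀ j, ∑ i, A i j = c j := ⟨_, fun _ => rfl⟩
  simp only [hc] at hdens hsub
  refine ⟨code, fun x hx => ?_, c, ?_, ?_⟩
  · have := hcode1 x hx
    rw [this]; exact hlev' x (by omega)
  · have h := prod_multinomial_le_card_fiber code A hsum
    have h1 : 0 < ∏ i, Nat.multinomial univ (A i) := prod_pos fun i _ => Nat.multinomial_pos _ _
    obtain ⟨f, hf⟩ := card_pos.1 (h1.trans_le h)
    exact ⟨f, (hsub f (by simpa using hf)).2⟩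
  · refine le_trans (by convert hdens) (Nat.cast_le.2 (card_le_card fun f hf => ?_))
    have := hsub f (by simpa using hf)
    exact mem_inter.2 ⟨this.1, by simpa using this.2⟩

theorem exists_isHitter_card_le_of_level {d n : ℕ} (hd : 2 ≤ d) {η : ℝ} (hη : 0 < η)
    (hηd : η < (d : ℝ)⁻¹) {p lam δ : ℝ} (hp : p = (d : ℝ)⁻¹ - η)
    (hlam : lam = Real.exp (p * Real.log p / (1 - p))) (hδ : δ = η / (2 * d))
    (m r : ℕ) (hr : 2 * n / (η * (d : ℝ) ^ m) ≤ r)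
    (hdr : 4 * n * d / (η * (d : ℝ) ^ m) ^ 2 ≤ δ) :
    ∃ Q, IsHitter d n Q ∧ (#Q : ℝ) ≤ ((n : ℝ) + 1) ^ d * (n * Real.log (((m + 1 + r : ℕ) : ℝ) + 1) /
      ((lam * δ) ^ (d * d ^ m) * ((((n : ℝ) + 1) ^ d)⁻¹) ^ r / (1 + lam * (1 - p)) ^ n) + 1) := by
  have hd0 : (0 : ℝ) < d := by positivity
  have hp1 : p < 1 := by
    have : (d : ℝ)⁻¹ ≤ 1 := inv_le_one_of_one_le₀ (by exact_mod_cast (by omega : 1 ≤ d))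
    rw [hp]; linarith
  have hδ0 : 0 < δ := by rw [hδ]; positivity
  have hlam0 : 0 < lam := by rw [hlam]; exact Real.exp_pos _
  have hZ0 : 0 < 1 + lam * (1 - p) := by
    have : 0 < lam * (1 - p) := mul_pos hlam0 (by linarith)
    linarith
  exact exists_isHitter_card_le hd ⟨0, by omega⟩ (by positivity)
    (exists_dense_divAssignments hd hη hηd hp hlam hδ m r hr hdr rfl _ rfl hZ0)

theorem eventually_add_pow_le_exp (D : ℕ) (c : ℝ) {e : ℝ} (he : 0 < e) :
    ∀ᶠ n : ℕ in Filter.atTop, ((n : ℝ) + c) ^ D ≤ Real.exp (e * n) := by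
  have h := (isLittleO_pow_exp_pos_mul_atTop D he).bound (Real.exp_pos (-(e * c)))
  have ht : Filter.Tendsto (fun n : ℕ => (n : ℝ) + c) Filter.atTop Filter.atTop :=
    Filter.tendsto_atTop_add_const_right _ _ tendsto_natCast_atTop_atTop
  filter_upwards [ht.eventually h] with n hn
  refine (le_abs_self _).trans ?_
  rw [← Real.norm_eq_abs]
  refine hn.trans (le_of_eq ?_)
  rw [Real.norm_eq_abs, Real.abs_exp, ← Real.exp_add]
  congr 1; ring

theorem one_add_div_rpow_eq {d : ℝ} (hd : 1 < d) :
    1 + (d - 1) / d ^ (d / (d - 1)) =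
      1 + Real.exp (d⁻¹ * Real.log d⁻¹ / (1 - d⁻¹)) * (1 - d⁻¹) := by
  have h0 : 0 < d := by linarith
  have h1 : d - 1 ≠ 0 := by linarith
  have e : d⁻¹ * Real.log d⁻¹ / (1 - d⁻¹) = Real.log d - Real.log d * (d / (d - 1)) := by
    rw [Real.log_inv]; field_simp; ring
  rw [e, Real.exp_sub, Real.exp_log h0, ← Real.rpow_def_of_pos h0]
  field_simp

theorem exists_one_add_exp_mul_le {d : ℕ} (hd : 2 ≤ d) {C e : ℝ} (he : 0 < e)
    (hC : C = 1 + ((d : ℝ) - 1) / (d : ℝ) ^ ((d : ℝ) / ((d : ℝ) - 1))) :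
    ∃ η : ℝ, 0 < η ∧ η < (d : ℝ)⁻¹ ∧ ∀ p, p = (d : ℝ)⁻¹ - η →
      1 + Real.exp (p * Real.log p / (1 - p)) * (1 - p) ≤ C * Real.exp e := by
  have hd1 : (1 : ℝ) < d := by exact_mod_cast hd
  have hd0 : (0 : ℝ) < (d : ℝ)⁻¹ := by positivity
  have hdi : (d : ℝ)⁻¹ < 1 := inv_lt_one_of_one_lt₀ hd1
  rw [one_add_div_rpow_eq hd1] at hC
  have hC0 : 0 < C := by
    rw [hC]
    have : 0 < Real.exp ((d : ℝ)⁻¹ * Real.log (d : ℝ)⁻¹ / (1 - (d : ℝ)⁻¹)) * (1 - (d : ℝ)⁻¹) :=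
      mul_pos (Real.exp_pos _) (by linarith)
    linarith
  set g : ℝ → ℝ := fun η => 1 + Real.exp (((d : ℝ)⁻¹ - η) * Real.log ((d : ℝ)⁻¹ - η) /
    (1 - ((d : ℝ)⁻¹ - η))) * (1 - ((d : ℝ)⁻¹ - η)) with hg
  have hcont : ContinuousAt g 0 := by
    have h1 : ContinuousAt (fun η : ℝ => (d : ℝ)⁻¹ - η) 0 := by fun_prop
    have h2 : ContinuousAt (fun η : ℝ => Real.log ((d : ℝ)⁻¹ - η)) 0 :=
      h1.log (by simpa using hd0.ne')
    have h3 : ContinuousAt (fun η : ℝ => 1 - ((d : ℝ)⁻¹ - η)) 0 := by fun_prop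
    exact continuousAt_const.add (((h1.mul h2).div h3 (by simp; linarith)).rexp.mul h3)
  have hlt : g 0 < C * Real.exp e := by
    have : g 0 = C := by simp [hg, hC]
    rw [this]
    have := Real.add_one_lt_exp he.ne'
    nlinarith
  have hev := (hcont.eventually_lt continuousAt_const hlt).filter_mono
    (nhdsWithin_le_nhds (s := Set.Ioi 0))
  have hev2 : ∀ᶠ η in nhdsWithin (0 : ℝ) (Set.Ioi 0), η ∈ Set.Ioo 0 (d : ℝ)⁻¹ :=
    Ioo_mem_nhdsGT hd0
  obtain ⟨η, h1, h2⟩ := (hev.and hev2).exists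
  exact ⟨η, h2.1, h2.2, fun p hp => by rw [hp]; exact h1.le⟩

theorem eventually_exists_isHitter {d : ℕ} (hd : 2 ≤ d) {C ε : ℝ} (hε : 0 < ε)
    (hC : C = 1 + ((d : ℝ) - 1) / (d : ℝ) ^ ((d : ℝ) / ((d : ℝ) - 1))) :
    ∀ᶠ n : ℕ in Filter.atTop, ∃ Q, IsHitter d n Q ∧ (#Q : ℝ) ≤ (C * (2 : ℝ) ^ ε) ^ n := by
  obtain ⟨e, he⟩ : ∃ e, e = ε * Real.log 2 / 3 := ⟨_, rfl⟩
  have he0 : 0 < e := by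
    have := Real.log_pos one_lt_two
    rw [he]; positivity
  obtain ⟨η, hη, hηd, hZ⟩ := exists_one_add_exp_mul_le hd he0 hC
  obtain ⟨p, hp⟩ : ∃ p, p = (d : ℝ)⁻¹ - η := ⟨_, rfl⟩
  obtain ⟨lam, hlam⟩ : ∃ lam, lam = Real.exp (p * Real.log p / (1 - p)) := ⟨_, rfl⟩
  obtain ⟨δ, hδ⟩ : ∃ δ, δ = η / (2 * d) := ⟨_, rfl⟩
  have hd0 : (0 : ℝ) < d := by positivity
  have hd1 : (1 : ℝ) < d := by exact_mod_cast hd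
  have hp1 : p < 1 := by
    have : (d : ℝ)⁻¹ < 1 := inv_lt_one_of_one_lt₀ hd1
    rw [hp]; linarith
  have hδ0 : 0 < δ := by rw [hδ]; positivity
  have hlam0 : 0 < lam := by rw [hlam]; exact Real.exp_pos _
  have hx0 : 0 < lam * δ := by positivity
  have hZ' := hZ p hp
  rw [← hlam] at hZ'
  obtain ⟨Z, hZe⟩ : ∃ Z, Z = 1 + lam * (1 - p) := ⟨_, rfl⟩
  have hZ1 : 1 ≤ Z := by
    have : 0 < lam * (1 - p) := mul_pos hlam0 (by linarith)
    linarith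
  rw [← hZe] at hZ'
  obtain ⟨l, hl⟩ : ∃ l, l = |Real.log (lam * δ)| := ⟨_, rfl⟩
  have hl0 : 0 ≤ l := by rw [hl]; exact abs_nonneg _
  obtain ⟨ζ, hζ⟩ : ∃ ζ, ζ = e / (d * (l + e)) := ⟨_, rfl⟩
  have hζ0 : 0 < ζ := by rw [hζ]; positivity
  have hζ1 : ζ ≤ 1 := by
    rw [hζ, div_le_one (by positivity)]; nlinarith
  have hζl : d * ζ * l ≤ e := by
    have : d * ζ * l = e * (l / (l + e)) := by rw [hζ]; field_simp
    rw [this]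
    exact mul_le_of_le_one_right he0.le ((div_le_one (by positivity)).2 (by linarith))
  obtain ⟨r, hr⟩ : ∃ r : ℕ, 2 * d / (η * ζ) ≤ r := ⟨_, Nat.le_ceil _⟩
  filter_upwards [eventually_add_pow_le_exp (d + 2 + d * r) (r + 2) he0,
    Filter.eventually_ge_atTop ⌈1 / ζ⌉₊,
    Filter.eventually_ge_atTop ⌈4 * (d : ℝ) ^ 3 / (η ^ 2 * ζ ^ 2 * δ)⌉₊,
    Filter.eventually_gt_atTop 0] with n hn1 hn2 hn3 hn4
  have hn0 : (0 : ℝ) < n := by exact_mod_cast hn4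
  have hζn : 1 ≤ ζ * n := by
    have := Nat.le_of_ceil_le hn2
    rw [div_le_iff₀ hζ0] at this
    linarith
  have hn3' := Nat.le_of_ceil_le hn3
  rw [div_le_iff₀ (by positivity)] at hn3'
  obtain ⟨m, hm1, hm2⟩ := exists_nat_pow_near hζn hd1
  have hm3 : ζ * n / d ≤ (d : ℝ) ^ m := by
    rw [div_le_iff₀ hd0, ← pow_succ]; exact hm2.le
  have hdm : 0 < (d : ℝ) ^ m := by positivity
  obtain ⟨Q, hQ, hQc⟩ := exists_isHitter_card_le_of_level (n := n) hd hη hηd hp hlam hδ m r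
    (by
      refine le_trans ?_ hr
      calc 2 * n / (η * (d : ℝ) ^ m) ≤ 2 * n / (η * (ζ * n / d)) := by gcongr
        _ = _ := by field_simp)
    (by
      calc 4 * n * d / (η * (d : ℝ) ^ m) ^ 2 ≤ 4 * n * d / (η * (ζ * n / d)) ^ 2 := by gcongr
        _ = 4 * (d : ℝ) ^ 3 / (η ^ 2 * ζ ^ 2 * n) := by field_simp
        _ ≤ δ := by
          rw [div_le_iff₀ (by positivity)]
          linarith)
  refine ⟨Q, hQ, hQc.trans ?_⟩
  rw [← hZe]
  have hZ0 : 0 < Z := by linarith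
  obtain ⟨B, hB⟩ : ∃ B : ℝ, B = n + (r + 2) := ⟨_, rfl⟩
  rw [← hB] at hn1
  have hr0 : (0 : ℝ) ≤ r := Nat.cast_nonneg _
  have hB1 : (n : ℝ) + 1 ≤ B := by linarith
  have hB0 : 1 ≤ B := by linarith
  have hlog : Real.log (((m + 1 + r : ℕ) : ℝ) + 1) ≤ B := by
    have hmn : (m : ℝ) ≤ n := by
      have h1 : (m : ℝ) ≤ (d : ℝ) ^ m := by exact_mod_cast (Nat.lt_pow_self (by omega)).le
      nlinarith
    refine (Real.log_le_self (by positivity)).trans ?_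
    push_cast
    linarith
  have hx : ((lam * δ) ^ (d * d ^ m))⁻¹ ≤ Real.exp (e * n) := by
    rw [← Real.exp_log (inv_pos.2 (pow_pos hx0 _)), Real.exp_le_exp, Real.log_inv, Real.log_pow]
    push_cast
    calc -((d : ℝ) * (d : ℝ) ^ m * Real.log (lam * δ))
        = (d : ℝ) * (d : ℝ) ^ m * (-Real.log (lam * δ)) := by ring
      _ ≤ (d : ℝ) * (ζ * n) * l := by
        have := neg_le_abs (Real.log (lam * δ))
        rw [← hl] at this
        exact (mul_le_mul_of_nonneg_left this (by positivity)).trans (by gcongr)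
      _ = (d * ζ * l) * n := by ring
      _ ≤ e * n := by gcongr
  have hρ : n * Real.log (((m + 1 + r : ℕ) : ℝ) + 1) /
      ((lam * δ) ^ (d * d ^ m) * ((((n : ℝ) + 1) ^ d)⁻¹) ^ r / Z ^ n) ≤
      n * B * (Real.exp (e * n) * B ^ (d * r) * Z ^ n) := by
    calc _ = n * Real.log (((m + 1 + r : ℕ) : ℝ) + 1) *
          (((lam * δ) ^ (d * d ^ m))⁻¹ * ((n : ℝ) + 1) ^ (d * r) * Z ^ n) := by
          rw [pow_mul ((n : ℝ) + 1), inv_pow]; field_simp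
      _ ≤ _ := by gcongr
  have hlog0 : 0 ≤ Real.log (((m + 1 + r : ℕ) : ℝ) + 1) :=
    Real.log_nonneg (by linarith [(Nat.cast_nonneg (m + 1 + r) : (0 : ℝ) ≤ (m + 1 + r : ℕ))])
  have hE : 1 ≤ Real.exp (e * n) * Z ^ n :=
    one_le_mul_of_one_le_of_one_le (Real.one_le_exp (by positivity)) (one_le_pow₀ hZ1)
  have hE0 : 0 ≤ Real.exp (e * n) * Z ^ n := by linarith
  calc _ ≤ B ^ d * (n * B * (Real.exp (e * n) * B ^ (d * r) * Z ^ n) +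
        B * B ^ (d * r) * (Real.exp (e * n) * Z ^ n)) := by
        have h1 : 1 ≤ B * B ^ (d * r) * (Real.exp (e * n) * Z ^ n) :=
          one_le_mul_of_one_le_of_one_le
            (one_le_mul_of_one_le_of_one_le hB0 (one_le_pow₀ hB0)) hE
        gcongr
    _ = B ^ d * (B * B ^ (d * r)) * (n + 1) * (Real.exp (e * n) * Z ^ n) := by ring
    _ ≤ B ^ d * (B * B ^ (d * r)) * B * (Real.exp (e * n) * Z ^ n) := by gcongr
    _ = B ^ (d + 2 + d * r) * Real.exp (e * n) * Z ^ n := by ring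
    _ ≤ Real.exp (e * n) * Real.exp (e * n) * (C * Real.exp e) ^ n := by gcongr
    _ = (C * (2 : ℝ) ^ ε) ^ n := by
        rw [mul_pow, mul_pow, ← Real.exp_nat_mul, mul_comm (n : ℝ) e,
          Real.rpow_def_of_pos two_pos, ← Real.exp_nat_mul]
        have : Real.exp ((n : ℝ) * (Real.log 2 * ε)) =
            Real.exp (e * n) * Real.exp (e * n) * Real.exp (e * n) := by
          rw [← Real.exp_add, ← Real.exp_add]
          congr 1; rw [he]; ring
        rw [this]; ring

/-- Index type of a distribution with `d ^ a - 1` elements of mass `d⁻ᵃ` and a thin tail. -/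
abbrev TailIndex (d a L : ℕ) := Fin (d ^ a - 1) ⊕ (Fin L × Fin (d - 1)) ⊕ Unit

/-- The exponent `l` of the mass `d⁻ˡ` of an element of `TailIndex d a L`. -/
def tailLevel {d a L : ℕ} : TailIndex d a L → ℕ :=
  Sum.elim (fun _ => a) (Sum.elim (fun q => a + 1 + q.1) fun _ => a + L)

/-- The lightest element of `TailIndex d a L`. -/
def tailEnd {d a L : ℕ} : TailIndex d a L := Sum.inr (Sum.inr ())

section
variable {d a L : ℕ}

theorem card_tailIndex (hd : 2 ≤ d) : Fintype.card (TailIndex d a L) = d ^ a + L * (d - 1) := by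
  have : 1 ≤ d ^ a := Nat.one_le_pow _ _ (by omega)
  simp only [Fintype.card_sum, Fintype.card_fin, Fintype.card_prod, Fintype.card_unit]
  omega

theorem sum_inv_pow_tailLevel (hd : 2 ≤ d) :
    ∑ x : TailIndex d a L, ((d : ℝ) ^ tailLevel x)⁻¹ = 1 := by
  have hd0 : (d : ℝ) ≠ 0 := by positivity
  have h1 : 1 ≤ d ^ a := Nat.one_le_pow _ _ (by omega)
  have hgeom : ∀ l : ℕ, ∑ i ∈ range l, ((d : ℝ) - 1) * ((d : ℝ) ^ (a + 1 + i))⁻¹ =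
      ((d : ℝ) ^ a)⁻¹ - ((d : ℝ) ^ (a + l))⁻¹ := fun l => by
    induction l with
    | zero => simp
    | succ l ih =>
      rw [sum_range_succ, ih, show a + 1 + l = a + l + 1 by ring, ← add_assoc, pow_succ]
      field_simp
      ring
  rw [Fintype.sum_sum_type, Fintype.sum_sum_type, Fintype.sum_prod_type]
  simp only [tailLevel, Sum.elim_inl, Sum.elim_inr, sum_const, card_univ, Fintype.card_fin,
    nsmul_eq_mul, Fintype.card_unit, Nat.cast_one, one_mul]
  rw [Nat.cast_sub h1, Nat.cast_sub (by omega), Nat.cast_pow, Nat.cast_one,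
    ← sum_range fun i => ((d : ℝ) - 1) * ((d : ℝ) ^ (a + 1 + i))⁻¹, hgeom, sub_mul,
    mul_inv_cancel₀ (pow_ne_zero _ hd0)]
  ring

theorem eq_tailEnd_of_sum_eq (hd : 2 ≤ d) (ha : 1 ≤ a) (f : TailIndex d a L → Fin d)
    (hf : ∀ j, ∑ x with f x = j, ((d : ℝ) ^ tailLevel x)⁻¹ = (d : ℝ)⁻¹) (q : Fin L × Fin (d - 1)) :
    f (Sum.inr (Sum.inl q)) = f tailEnd := by
  by_contra hq
  have hd0 : (d : ℝ) ≠ 0 := by positivity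
  obtain ⟨q, hq, hmax⟩ := exists_max_image
    ({q | f (Sum.inr (Sum.inl q)) ≠ f tailEnd} : Finset (Fin L × Fin (d - 1)))
    (fun q => (q.1 : ℕ)) ⟨q, by simpa using hq⟩
  simp only [mem_filter, mem_univ, true_and] at hq hmax
  set j := f (Sum.inr (Sum.inl q)) with hj
  set e := a + 1 + (q.1 : ℕ) with he
  have hle : ∀ x, f x = j → tailLevel x ≤ e := by
    rintro (x | x | x) hx
    · simp only [tailLevel, Sum.elim_inl]; omega
    · have := hmax x (by rw [hx]; exact hq)
      simp only [tailLevel, Sum.elim_inr, Sum.elim_inl]; omega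
    · exact absurd hx.symm hq
  have hnat : ∑ x with f x = j, d ^ (e - tailLevel x) = d ^ (e - 1) := by
    have h := congrArg (fun t : ℝ => t * (d : ℝ) ^ e) (hf j)
    simp only [sum_mul] at h
    have h1 : (d : ℝ)⁻¹ * (d : ℝ) ^ e = (d : ℝ) ^ (e - 1) := by
      rw [pow_sub₀ _ hd0 (by omega)]; ring
    have h2 : ∑ x with f x = j, ((d : ℝ) ^ tailLevel x)⁻¹ * (d : ℝ) ^ e =
        ∑ x with f x = j, (d : ℝ) ^ (e - tailLevel x) := by
      refine sum_congr rfl fun x hx => ?_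
      rw [pow_sub₀ _ hd0 (hle x (by simpa using hx))]; ring
    rw [h1, h2] at h
    exact_mod_cast h
  have hmod : d ∣ #{x | f x = j ∧ tailLevel x = e} := by
    have h := sum_filter_add_sum_filter_not ({x | f x = j} : Finset (TailIndex d a L))
      (fun x => tailLevel x = e) fun x => d ^ (e - tailLevel x)
    rw [hnat] at h
    have h1 : d ∣ d ^ (e - 1) := dvd_pow_self d (by omega)
    rw [← h] at h1
    have h2 : d ∣ ∑ x ∈ ({x | f x = j} : Finset (TailIndex d a L)) with ¬ tailLevel x = e,
        d ^ (e - tailLevel x) := dvd_sum fun x hx => by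
      simp only [mem_filter, mem_univ, true_and] at hx
      have := hle x hx.1
      exact dvd_pow_self d (by omega)
    have h3 := (Nat.dvd_add_left h2).1 h1
    rw [sum_congr rfl fun x hx => by
      rw [(mem_filter.1 hx).2, Nat.sub_self, pow_zero], sum_const, smul_eq_mul, mul_one,
      filter_filter] at h3
    exact h3
  have hpos : 0 < #{x | f x = j ∧ tailLevel x = e} :=
    card_pos.2 ⟨Sum.inr (Sum.inl q), by simp [tailLevel, ← hj, he]⟩
  have hlt : #{x | f x = j ∧ tailLevel x = e} ≤ d - 1 := by
    calc _ ≤ #((univ : Finset (Fin (d - 1))).image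
          fun y => (Sum.inr (Sum.inl (q.1, y)) : TailIndex d a L)) := by
          refine card_le_card fun x hx => ?_
          simp only [mem_filter, mem_univ, true_and] at hx
          obtain ⟨hx1, hx2⟩ := hx
          rcases x with x | ⟨x, y⟩ | x
          · simp only [tailLevel, Sum.elim_inl] at hx2; omega
          · simp only [tailLevel, Sum.elim_inr, Sum.elim_inl] at hx2
            have : x = q.1 := Fin.ext (by omega)
            rw [this]
            exact mem_image_of_mem _ (mem_univ y)
          · exact absurd hx1.symm hq
      _ ≤ #(univ : Finset (Fin (d - 1))) := card_image_le
      _ = d - 1 := by simp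
  have := Nat.le_of_dvd hpos hmod
  omega

theorem card_fiber_of_sum_eq (hd : 2 ≤ d) (ha : 1 ≤ a) (f : TailIndex d a L → Fin d)
    (hf : ∀ j, ∑ x with f x = j, ((d : ℝ) ^ tailLevel x)⁻¹ = (d : ℝ)⁻¹) (j : Fin d)
    (hj : j ≠ f tailEnd) : #{x | f x = j} = d ^ (a - 1) := by
  have hd0 : (d : ℝ) ≠ 0 := by positivity
  have h := hf j
  rw [sum_congr rfl (g := fun _ => ((d : ℝ) ^ a)⁻¹), sum_const, nsmul_eq_mul] at h
  · have h1 : (#{x | f x = j} : ℝ) = ((d ^ (a - 1) : ℕ) : ℝ) := by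
      rw [Nat.cast_pow, pow_sub₀ _ hd0 ha, pow_one]
      field_simp at h ⊢
      exact h
    exact_mod_cast h1
  · rintro (x | x | x) hx
    · rfl
    · rw [mem_filter, eq_tailEnd_of_sum_eq hd ha f hf] at hx
      exact absurd hx.2.symm hj
    · exact absurd (mem_filter.1 hx).2.symm hj

theorem prod_factorial_card_fiber (hd : 2 ≤ d) (ha : 1 ≤ a) (f : TailIndex d a L → Fin d)
    (hf : ∀ j, ∑ x with f x = j, ((d : ℝ) ^ tailLevel x)⁻¹ = (d : ℝ)⁻¹) :
    ∏ j, (#{x | f x = j}).factorial =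
      (d ^ (a - 1)).factorial ^ (d - 1) * (d ^ (a - 1) + L * (d - 1)).factorial := by
  have hc := card_fiber_of_sum_eq hd ha f hf
  have hcard : #(univ.erase (f tailEnd)) = d - 1 := by
    rw [card_erase_of_mem (mem_univ _), card_univ, Fintype.card_fin]
  have hz : #{x | f x = f tailEnd} = d ^ (a - 1) + L * (d - 1) := by
    have h := card_eq_sum_card_fiberwise (s := (univ : Finset (TailIndex d a L))) (f := f)
      (t := univ) fun _ _ => mem_univ _
    rw [card_univ, card_tailIndex hd, ← add_sum_erase univ _ (mem_univ (f tailEnd)),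
      sum_congr rfl fun j hj => hc j (ne_of_mem_erase hj), sum_const, hcard, smul_eq_mul] at h
    have h1 : d ^ a = d ^ (a - 1) + (d - 1) * d ^ (a - 1) := by
      obtain ⟨b, rfl⟩ : ∃ b, a = b + 1 := ⟨a - 1, by omega⟩
      obtain ⟨c, rfl⟩ : ∃ c, d = c + 1 := ⟨d - 1, by omega⟩
      simp only [Nat.add_sub_cancel]
      ring
    omega
  rw [← mul_prod_erase univ _ (mem_univ (f tailEnd)), hz,
    prod_congr rfl fun j hj => by rw [hc j (ne_of_mem_erase hj)], prod_const, hcard, mul_comm]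

theorem card_filter_sum_eq_le (hd : 2 ≤ d) (ha : 1 ≤ a) (D : Finset (TailIndex d a L → Fin d))
    (hD : ∀ f ∈ D, ∀ j, ∑ x with f x = j, ((d : ℝ) ^ tailLevel x)⁻¹ = (d : ℝ)⁻¹) :
    #D ≤ d ^ d ^ a := by
  calc #D ≤ #(univ : Finset ((Fin (d ^ a - 1) → Fin d) × Fin d)) := by
        refine card_le_card_of_injOn (fun f => (fun x => f (Sum.inl x), f tailEnd))
          (fun _ _ => mem_coe.2 (mem_univ _)) fun f hf g hg hfg => ?_
        simp only [Prod.mk.injEq] at hfg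
        funext x
        rcases x with x | x | x
        · exact congrFun hfg.1 x
        · rw [eq_tailEnd_of_sum_eq hd ha f (hD f hf), eq_tailEnd_of_sum_eq hd ha g (hD g hg)]
          exact hfg.2
        · exact hfg.2
    _ = d ^ (d ^ a - 1) * d := by simp
    _ = d ^ d ^ a := by
        rw [← pow_succ, Nat.sub_add_cancel (Nat.one_le_pow _ _ (by omega))]

end

theorem IsOrderedPartition.exists_label {d n : ℕ} {S : Fin d → Finset (Fin n)}
    (hS : IsOrderedPartition d n S) : ∃ f : Fin n → Fin d, ∀ x j, f x = j ↔ x ∈ S j := by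
  have h : ∀ x, ∃ j, x ∈ S j := fun x => by
    have := hS.2.symm ▸ mem_univ x
    simpa using this
  choose f hf using h
  refine ⟨f, fun x j => ⟨fun h => h ▸ hf x, fun hx => ?_⟩⟩
  by_contra hne
  exact disjoint_left.1 (hS.1 _ _ hne) (hf x) hx

theorem factorial_le_of_isHitter {d a L n : ℕ} (hd : 2 ≤ d) (ha : 1 ≤ a) (hL : 1 ≤ L)
    (hn : n = d ^ a + L * (d - 1)) {Q : Finset (Fin d → Finset (Fin n))} (hQ : IsHitter d n Q) :
    n.factorial ≤ #Q * (d ^ d ^ a *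
      ((d ^ (a - 1)).factorial ^ (d - 1) * (d ^ (a - 1) + L * (d - 1)).factorial)) := by
  classical
  have hcard : Fintype.card (TailIndex d a L) = n := by rw [card_tailIndex hd, hn]
  let e : TailIndex d a L ≃ Fin n := Fintype.equivFinOfCardEq hcard
  have hd1 : (1 : ℝ) < d := by exact_mod_cast hd
  have hF : ∀ S : Fin d → Finset (Fin n), ∃ f : Fin n → Fin d,
      IsOrderedPartition d n S → ∀ x j, f x = j ↔ x ∈ S j := fun S => by
    by_cases hS : IsOrderedPartition d n S
    · obtain ⟨f, hf⟩ := hS.exists_label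
      exact ⟨f, fun _ => hf⟩
    · exact ⟨fun _ => ⟨0, by omega⟩, fun h => absurd h hS⟩
  choose F hF using hF
  let D : Finset (TailIndex d a L → Fin d) :=
    {f | ∀ j, ∑ x with f x = j, ((d : ℝ) ^ tailLevel x)⁻¹ = (d : ℝ)⁻¹}
  have hD : ∀ f ∈ D, ∀ j, ∑ x with f x = j, ((d : ℝ) ^ tailLevel x)⁻¹ = (d : ℝ)⁻¹ :=
    fun f hf => (mem_filter.1 hf).2
  have hcover : (univ : Finset (Equiv.Perm (TailIndex d a L))) ⊆
      Q.biUnion fun S => D.biUnion fun g => {τ | (F S ∘ e) ∘ τ = g} := fun τ _ => by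
    have hlev : ∀ x : TailIndex d a L, 1 ≤ tailLevel x := by
      rintro (x | x | x) <;> simp only [tailLevel, Sum.elim_inl, Sum.elim_inr] <;> omega
    let μ : Fin n → ℝ := fun i => ((d : ℝ) ^ tailLevel (τ.symm (e.symm i)))⁻¹
    have hμ : IsDadicDist d n μ := by
      refine ⟨fun i => by positivity, ?_, fun i => Or.inr ⟨_, hlev _, rfl⟩⟩
      rw [← sum_inv_pow_tailLevel (d := d) (a := a) (L := L) hd]
      exact Equiv.sum_comp (e.symm.trans τ.symm) fun x => ((d : ℝ) ^ tailLevel x)⁻¹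
    have h0 : 0 < d ^ a - 1 := by
      have := Nat.one_lt_pow (by omega : a ≠ 0) (by omega : 1 < d)
      omega
    obtain ⟨S, hSQ, hS, hsum⟩ := hQ.2 μ hμ
      ⟨e (τ (Sum.inl ⟨0, h0⟩)), e (τ tailEnd), by
        simp only [μ, Equiv.symm_apply_apply, tailEnd, tailLevel, Sum.elim_inl, Sum.elim_inr]
        intro h
        have := pow_right_injective₀ (by linarith) hd1.ne' (inv_injective h)
        omega⟩
    refine mem_biUnion.2 ⟨S, hSQ, mem_biUnion.2 ⟨_, ?_, mem_filter.2 ⟨mem_univ _, rfl⟩⟩⟩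
    refine mem_filter.2 ⟨mem_univ _, fun j => ?_⟩
    rw [← one_div, ← hsum j]
    refine sum_equiv (τ.trans e) (fun x => ?_) fun x _ => ?_
    · simp [hF S hS]
    · simp [μ]
  calc n.factorial = #(univ : Finset (Equiv.Perm (TailIndex d a L))) := by
        rw [card_univ, Fintype.card_perm, hcard]
    _ ≤ #Q * (#D * ((d ^ (a - 1)).factorial ^ (d - 1) *
          (d ^ (a - 1) + L * (d - 1)).factorial)) := by
        refine (card_le_card hcover).trans (card_biUnion_le_card_mul _ _ _ fun S _ =>
          card_biUnion_le_card_mul _ _ _ fun g hg => ?_)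
        rw [← prod_factorial_card_fiber hd ha g (hD g hg)]
        convert card_perm_comp_eq_le (F S ∘ e) g
    _ ≤ _ := by
        gcongr
        exact card_filter_sum_eq_le hd ha D hD

theorem pow_self_le_mul_multinomial (m k r : ℕ) {n : ℕ} (hn : n = r + m * k) :
    n ^ n * (k.factorial ^ m * r.factorial) ≤
      (n + 1) ^ (m + 1) * (n.factorial * (r ^ r * (k ^ k) ^ m)) := by
  let a : Option (Fin m) → ℕ := fun i => i.elim r fun _ => k
  have hs : ∑ i, a i = n := by simp [a, Fintype.sum_option, hn]
  have h := pow_sum_le_multinomial_mul_prod_pow_self a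
  have hm := Nat.multinomial_spec univ a
  rw [hs] at h hm
  have h1 : ∏ i, (a i).factorial = k.factorial ^ m * r.factorial := by
    simp [a, Fintype.prod_option, mul_comm]
  have h2 : ∏ i, a i ^ a i = r ^ r * (k ^ k) ^ m := by
    simp [a, Fintype.prod_option]
  rw [h1] at hm
  rw [h2, Fintype.card_option, Fintype.card_fin] at h
  calc _ ≤ (n + 1) ^ (m + 1) * (Nat.multinomial univ a * (r ^ r * (k ^ k) ^ m)) *
        (k.factorial ^ m * r.factorial) := by gcongr
    _ = _ := by rw [← hm]; ring

theorem pow_self_le_of_isHitter {d b L n : ℕ} (hd : 2 ≤ d) (hL : 1 ≤ L)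
    (hn : n = d ^ (b + 1) + L * (d - 1)) {Q : Finset (Fin d → Finset (Fin n))}
    (hQ : IsHitter d n Q) :
    n ^ n ≤ (n + 1) ^ d * (#Q * (d ^ d ^ (b + 1) *
      ((d ^ b + L * (d - 1)) ^ (d ^ b + L * (d - 1)) * ((d ^ b) ^ d ^ b) ^ (d - 1)))) := by
  have h1 := factorial_le_of_isHitter hd (Nat.succ_pos b) hL hn hQ
  have hn' : n = d ^ b + L * (d - 1) + (d - 1) * d ^ b := by
    obtain ⟨c, rfl⟩ : ∃ c, d = c + 1 := ⟨d - 1, by omega⟩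
    rw [hn, Nat.add_sub_cancel]
    ring
  have h2 := pow_self_le_mul_multinomial (d - 1) (d ^ b) (d ^ b + L * (d - 1)) hn'
  rw [Nat.sub_add_cancel (by omega)] at h2
  rw [Nat.succ_eq_add_one, Nat.add_sub_cancel] at h1
  generalize d ^ b + L * (d - 1) = r at *
  refine Nat.le_of_mul_le_mul_right (c := (d ^ b).factorial ^ (d - 1) * r.factorial) ?_
    (by positivity)
  refine h2.trans ?_
  calc _ ≤ (n + 1) ^ d * ((#Q * (d ^ d ^ (b + 1) * ((d ^ b).factorial ^ (d - 1) * r.factorial))) *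
        (r ^ r * ((d ^ b) ^ d ^ b) ^ (d - 1))) := by gcongr
    _ = _ := by ring

theorem eventually_entropy_nonneg {D e C : ℝ} (hD : 1 < D) (he : 0 < e)
    (hC : C = 1 + (D - 1) / D ^ (D / (D - 1))) :
    ∀ᶠ t in nhds (D ^ (D / (D - 1))), 0 < (t + (D - 1)) * Real.log (t + (D - 1)) -
      t * Real.log t - D * Real.log D - (t + (D - 1)) * (Real.log C - e) := by
  set T := D ^ (D / (D - 1)) with hT
  have hT0 : 0 < T := by positivity
  have hD1 : 0 < D - 1 := by linarith
  have hcont : ContinuousAt (fun t => (t + (D - 1)) * Real.log (t + (D - 1)) -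
      t * Real.log t - D * Real.log D - (t + (D - 1)) * (Real.log C - e)) T := by
    have h1 := hT0.ne'
    have h2 : T + (D - 1) ≠ 0 := by positivity
    fun_prop (disch := assumption)
  refine hcont.eventually_const_lt ?_
  have h1 : Real.log C = Real.log (T + (D - 1)) - Real.log T := by
    rw [← Real.log_div (by positivity) (by positivity), hC]
    congr 1; field_simp
  have h2 : (D - 1) * Real.log T = D * Real.log D := by
    rw [hT, Real.log_rpow (by linarith)]; field_simp
  rw [h1]
  have h3 : 0 < (T + (D - 1)) * e := by positivity
  linarith

theorem frequently_le_card_of_isHitter {d : ℕ} (hd : 2 ≤ d) {C ε : ℝ} (hε : 0 < ε)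
    (hC : C = 1 + ((d : ℝ) - 1) / (d : ℝ) ^ ((d : ℝ) / ((d : ℝ) - 1))) :
    ∃ᶠ n : ℕ in Filter.atTop, ∀ Q, IsHitter d n Q → (C * (2 : ℝ) ^ (-ε)) ^ n ≤ (#Q : ℝ) := by
  have hD : (1 : ℝ) < d := by exact_mod_cast hd
  have hD1 : (0 : ℝ) < d - 1 := by linarith
  have hC0 : 0 < C := by rw [hC]; positivity
  obtain ⟨T, hT⟩ : ∃ T : ℝ, T = (d : ℝ) ^ ((d : ℝ) / ((d : ℝ) - 1)) := ⟨_, rfl⟩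
  have hT1 : 1 < T := hT ▸ Real.one_lt_rpow hD (by positivity)
  have hl2 : 0 < Real.log 2 := Real.log_pos one_lt_two
  obtain ⟨e, he⟩ : ∃ e : ℝ, e = ε * Real.log 2 / 2 := ⟨_, rfl⟩
  have he0 : 0 < e := by rw [he]; positivity
  obtain ⟨s, hs⟩ : ∃ s : ℝ, s = (T - 1) / (d - 1) := ⟨_, rfl⟩
  have hs0 : 0 < s := by rw [hs]; apply div_pos <;> linarith
  have hk : Filter.Tendsto (fun b : ℕ => (d : ℝ) ^ b) Filter.atTop Filter.atTop :=
    tendsto_pow_atTop_atTop_of_one_lt hD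
  have hlim : Filter.Tendsto (fun b : ℕ => (⌊s * (d : ℝ) ^ b⌋₊ : ℝ) / (d : ℝ) ^ b) Filter.atTop
      (nhds s) := (tendsto_nat_floor_mul_div_atTop hs0.le).comp hk
  have hθ : Filter.Tendsto
      (fun b : ℕ => 1 + (⌊s * (d : ℝ) ^ b⌋₊ : ℝ) / (d : ℝ) ^ b * ((d : ℝ) - 1)) Filter.atTop
      (nhds ((d : ℝ) ^ ((d : ℝ) / ((d : ℝ) - 1)))) := by
    have h := (hlim.mul_const ((d : ℝ) - 1)).const_add 1
    have h1 : 1 + s * ((d : ℝ) - 1) = T := by rw [hs]; field_simp; ring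
    rwa [h1, hT] at h
  have hn : Filter.Tendsto (fun b : ℕ => d ^ (b + 1) + ⌊s * (d : ℝ) ^ b⌋₊ * (d - 1))
      Filter.atTop Filter.atTop :=
    Filter.tendsto_atTop_mono (fun b => (b.le_succ.trans
      (Nat.lt_pow_self (by omega : 1 < d)).le).trans (Nat.le_add_right _ _)) Filter.tendsto_id
  refine hn.frequently (Filter.Eventually.frequently ?_)
  filter_upwards [hθ.eventually (eventually_entropy_nonneg hD he0 hC),
    hn.eventually (eventually_add_pow_le_exp d 1 he0), hlim.eventually_const_lt hs0]
    with b hb hexp hpos Q hQ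
  have hL : 1 ≤ ⌊s * (d : ℝ) ^ b⌋₊ := by
    by_contra h
    rw [show ⌊s * (d : ℝ) ^ b⌋₊ = 0 by omega] at hpos
    simp at hpos
  generalize ⌊s * (d : ℝ) ^ b⌋₊ = L at *
  have hmain := pow_self_le_of_isHitter hd hL rfl hQ
  obtain ⟨n, hn⟩ : ∃ n, n = d ^ (b + 1) + L * (d - 1) := ⟨_, rfl⟩
  obtain ⟨r, hr⟩ : ∃ r, r = d ^ b + L * (d - 1) := ⟨_, rfl⟩
  have hd0 : 0 < d := by omega
  have hk0 : 0 < (d : ℝ) ^ b := by positivity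
  have hr0 : (0 : ℝ) < r := by
    have : 0 < d ^ b := by positivity
    exact_mod_cast (by omega : 0 < r)
  have hn0 : (0 : ℝ) < n := by
    have : 0 < d ^ (b + 1) := by positivity
    exact_mod_cast (by omega : 0 < n)
  rw [← hn] at hexp
  have hcast : ((d - 1 : ℕ) : ℝ) = (d : ℝ) - 1 := by
    rw [Nat.cast_sub (by omega), Nat.cast_one]
  obtain ⟨t, ht⟩ : ∃ t : ℝ, t = 1 + (L : ℝ) / (d : ℝ) ^ b * ((d : ℝ) - 1) := ⟨_, rfl⟩
  have hrt : (r : ℝ) = (d : ℝ) ^ b * t := by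
    rw [hr, ht]; push_cast; rw [hcast]; field_simp
  have hnt : (n : ℝ) = (d : ℝ) ^ b * (t + (d - 1)) := by
    rw [hn, ht]; push_cast; rw [hcast]; field_simp; ring
  rw [← ht] at hb
  have hmain' : (n : ℝ) ^ n ≤ ((n : ℝ) + 1) ^ d * (#Q * ((d : ℝ) ^ d ^ (b + 1) *
      ((r : ℝ) ^ r * (((d : ℝ) ^ b) ^ d ^ b) ^ (d - 1)))) := by
    rw [hn, hr]; exact_mod_cast hmain
  clear hmain
  generalize hq : (#Q : ℝ) = q at *
  have hq0 : 0 < q := by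
    by_contra h
    have h0 : q = 0 := le_antisymm (not_lt.1 h) (hq ▸ Nat.cast_nonneg _)
    rw [h0, zero_mul, mul_zero] at hmain'
    exact absurd hmain' (not_le.2 (by positivity))
  rw [← hn]
  have hlog := Real.log_le_log (by positivity) hmain'
  have hexp' := Real.log_le_log (by positivity) hexp
  rw [Real.log_exp] at hexp'
  rw [Real.log_mul (by positivity) (by positivity), Real.log_mul (by positivity) (by positivity),
    Real.log_mul (by positivity) (by positivity), Real.log_mul (by positivity) (by positivity)]
    at hlog
  rw [Real.log_pow (n : ℝ), Real.log_pow (d : ℝ), Real.log_pow (r : ℝ), Real.log_pow _ (d - 1),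
    Real.log_pow ((d : ℝ) ^ b)] at hlog
  have ht0 : 0 < t := by
    rw [hrt] at hr0; exact (mul_pos_iff_of_pos_left hk0).1 hr0
  have hlogr : Real.log r = Real.log ((d : ℝ) ^ b) + Real.log t := by
    rw [hrt, Real.log_mul (by positivity) (by positivity)]
  have hlogn : Real.log n = Real.log ((d : ℝ) ^ b) + Real.log (t + (d - 1)) := by
    rw [hnt, Real.log_mul (by positivity) (by positivity)]
  rw [hlogr, hlogn, hcast, hrt] at hlog
  push_cast at hlog
  rw [pow_succ] at hlog
  rw [← Real.log_le_log_iff (by positivity) hq0, Real.log_pow, Real.log_mul (by positivity)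
    (by positivity), Real.log_rpow two_pos]
  have hb' := mul_pos hk0 hb
  have h2 : -ε * Real.log 2 = -(2 * e) := by rw [he]; ring
  rw [h2]
  rw [hnt] at hlog hexp' ⊢
  generalize Real.log ((d : ℝ) ^ b) = lk at *
  nlinarith

end

/-- `q^{(d)}(n) ≤ C_d^{n+o(n)}` for all `n`, and this is tight (up to sub-exponential
factors) for infinitely many `n`, where `C_d = 1 + (d-1)/d^{d/(d-1)}`. -/
theorem qd_bounds (d : ℕ) (hd : 2 ≤ d) :
    ∀ ε > (0 : ℝ),
      (∃ N : ℕ, ∀ n : ℕ, N ≤ n →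
        (qd d n : ℝ) ≤
          ((1 + ((d : ℝ) - 1) / (d : ℝ) ^ ((d : ℝ) / ((d : ℝ) - 1))) * (2 : ℝ) ^ ε) ^ n) ∧
      (∀ N : ℕ, ∃ n : ℕ, N ≤ n ∧
        ((1 + ((d : ℝ) - 1) / (d : ℝ) ^ ((d : ℝ) / ((d : ℝ) - 1))) * (2 : ℝ) ^ (-ε)) ^ n ≤
          (qd d n : ℝ)) := by
  intro ε hε
  have hupper := eventually_exists_isHitter hd hε rfl
  refine ⟨?_, fun N => ?_⟩
  · obtain ⟨N, hN⟩ := Filter.eventually_atTop.1 hupper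
    refine ⟨N, fun n hn => ?_⟩
    obtain ⟨Q, hQ, hcard⟩ := hN n hn
    refine le_trans ?_ hcard
    have h : qd d n ≤ Q.card := Nat.sInf_le ⟨Q, hQ, rfl⟩
    exact_mod_cast h
  · obtain ⟨n, hlower, ⟨Q, hQ, -⟩, hn⟩ := ((frequently_le_card_of_isHitter hd hε rfl).and_eventually
      (hupper.and (Filter.eventually_ge_atTop N))).exists
    refine ⟨n, hn, ?_⟩
    obtain ⟨Q', hQ', hcard⟩ := Nat.sInf_mem
      (⟨_, Q, hQ, rfl⟩ : {m | ∃ Q : Finset (Fin d → Finset (Fin n)),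
        IsHitter d n Q ∧ Q.card = m}.Nonempty)
    exact (hlower Q' hQ').trans_eq (congrArg Nat.cast hcard)
end

section
/- For every fixed ε > 0 there exists a constant C₀ > 0 such that for every β ∈ [1,2), G(β) ≥ −log₂(5/4) + C₀·|β − 5/4|^{2+ε}. In particular, G(β) > −log₂(5/4) whenever β ≠ 5/4. -/
/-- The binary entropy function, `h(p) = p log₂(1/p) + (1-p) log₂(1/(1-p))`,
with the convention `h(0) = h(1) = 0` (automatic since `1/0 = 0` and `logb 2 0 = 0`). -/
noncomputable def binH (p : ℝ) : ℝ :=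
  p * Real.logb 2 (1 / p) + (1 - p) * Real.logb 2 (1 / (1 - p))

/-- `(c, b) ∈ C(β)`: `c : ℕ → [0,1]`, `∑ cᵢ/2ⁱ = 1/(β·2ᵇ)` and `∑ cᵢ ≤ 1`
(the latter expressed via partial sums, which is equivalent for nonnegative terms). -/
def memC (β : ℝ) (c : ℕ → ℝ) (b : ℕ) : Prop :=
  (∀ i, c i ∈ Set.Icc (0 : ℝ) 1) ∧
  (∑' i : ℕ, c i / 2 ^ i) = 1 / (β * 2 ^ b) ∧
  ∀ n : ℕ, (∑ i ∈ Finset.range n, c i) ≤ 1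

/-- `α ∈ A(c,b)`: `α : ℕ → [0,1]` with `∑ αᵢ cᵢ / 2ⁱ = 1/(β·2^{b+1})`. -/
def memA (β : ℝ) (b : ℕ) (c α : ℕ → ℝ) : Prop :=
  (∀ i, α i ∈ Set.Icc (0 : ℝ) 1) ∧
  (∑' i : ℕ, α i * c i / 2 ^ i) = 1 / (β * 2 ^ (b + 1))

/-- `P(c,α) = ∑ h(αᵢ)·cᵢ − h(∑ αᵢ·cᵢ)`. -/
noncomputable def Pfun (c α : ℕ → ℝ) : ℝ :=
  (∑' i : ℕ, binH (α i) * c i) - binH (∑' i : ℕ, α i * c i)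

/-- `sup_{α ∈ A(c,b)} P(c,α)`. -/
noncomputable def supP (β : ℝ) (b : ℕ) (c : ℕ → ℝ) : ℝ :=
  sSup {y | ∃ α, memA β b c α ∧ y = Pfun c α}

/-- `G(β) = inf_{(c,b) ∈ C(β)} sup_{α ∈ A(c,b)} P(c,α)`. -/
noncomputable def Gfun (β : ℝ) : ℝ :=
  sInf {y | ∃ c b, memC β c b ∧ y = supP β b c}

lemma mul_log_inv_le {p q : ℝ} (hp0 : 0 ≤ p) (hp1 : p ≤ 1) (hq0 : 0 < q) (hq1 : q ≤ 1) :
    p * Real.log (1 / p) ≤ p * Real.log (1 / q) + (q - p) - (p - q) ^ 2 / 4 := by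
  rcases hp0.eq_or_lt with rfl | hp
  · simp only [zero_mul]
    nlinarith
  have hM : 0 < (p + q) / 2 := by positivity
  have h1 := Real.log_le_sub_one_of_pos (div_pos hq0 hM)
  have h2 := Real.log_le_sub_one_of_pos (div_pos hM hp)
  rw [Real.log_div (by positivity) (by positivity)] at h1 h2
  simp only [one_div, Real.log_inv]
  have h3 : p * (Real.log q - Real.log p) ≤
      p * ((q / ((p + q) / 2) - 1) + ((p + q) / 2 / p - 1)) :=
    mul_le_mul_of_nonneg_left (by linarith) hp.le
  have h4 : p * ((q / ((p + q) / 2) - 1) + ((p + q) / 2 / p - 1))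
      = (q - p) - (p - q) ^ 2 / (2 * (p + q)) := by
    field_simp
    ring
  have h5 : (p - q) ^ 2 / 4 ≤ (p - q) ^ 2 / (2 * (p + q)) :=
    div_le_div_of_nonneg_left (sq_nonneg _) (by positivity) (by linarith)
  linarith

lemma binH_eq_div (p : ℝ) :
    binH p = (p * Real.log (1 / p) + (1 - p) * Real.log (1 / (1 - p))) / Real.log 2 := by
  simp only [binH, Real.logb]
  ring

lemma binH_nonneg {p : ℝ} (hp0 : 0 ≤ p) (hp1 : p ≤ 1) : 0 ≤ binH p := by
  rw [binH_eq_div]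
  have hl := Real.log_pos one_lt_two
  have h1 : 0 ≤ Real.log (1 / p) := by
    rw [one_div, Real.log_inv]
    linarith [Real.log_nonpos hp0 hp1]
  have h2 : 0 ≤ Real.log (1 / (1 - p)) := by
    rw [one_div, Real.log_inv]
    linarith [Real.log_nonpos (sub_nonneg.2 hp1) (by linarith)]
  have h3 : 0 ≤ 1 - p := by linarith
  positivity

lemma binH_le_one {p : ℝ} (hp0 : 0 ≤ p) (hp1 : p ≤ 1) : binH p ≤ 1 := by
  rw [binH_eq_div]
  have hl := Real.log_pos one_lt_two
  rw [div_le_one hl]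
  have h1 := mul_log_inv_le hp0 hp1 (q := 1 / 2) (by norm_num) (by norm_num)
  have h2 := mul_log_inv_le (sub_nonneg.2 hp1) (by linarith) (q := 1 / 2) (by norm_num)
    (by norm_num)
  rw [one_div_one_div] at h1 h2
  nlinarith [sq_nonneg (p - 1 / 2), sq_nonneg (1 - p - 1 / 2)]

/-- Entropy lies below its tangent at `1/5`, with a quadratic gap. -/
lemma binH_le_tangent {p : ℝ} (hp0 : 0 ≤ p) (hp1 : p ≤ 1) :
    binH p ≤ 2 * p + Real.logb 2 (5 / 4) - (p - 1 / 5) ^ 2 / 2 := by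
  have hl := Real.log_pos one_lt_two
  have hl1 : Real.log 2 < 1 := by linarith [Real.log_two_lt_d9]
  rw [binH_eq_div, div_le_iff₀ hl, Real.logb]
  have h1 := mul_log_inv_le hp0 hp1 (q := 1 / 5) (by norm_num) (by norm_num)
  have h2 := mul_log_inv_le (sub_nonneg.2 hp1) (by linarith) (q := 4 / 5) (by norm_num)
    (by norm_num)
  have h3 : Real.log (1 / (1 / 5)) = Real.log (5 / 4) + 2 * Real.log 2 := by
    rw [show (1 / (1 / 5) : ℝ) = 5 / 4 * 2 ^ 2 by norm_num,
      Real.log_mul (by norm_num) (by norm_num), Real.log_pow]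
    norm_num
  have h4 : (1 / (4 / 5) : ℝ) = 5 / 4 := by norm_num
  rw [h3] at h1
  rw [h4] at h2
  have h5 : Real.log (5 / 4) / Real.log 2 * Real.log 2 = Real.log (5 / 4) := by field_simp
  have h6 : (p - 1 / 5) ^ 2 * Real.log 2 ≤ (p - 1 / 5) ^ 2 :=
    mul_le_of_le_one_right (sq_nonneg _) hl1.le
  linarith [show (1 - p - 4 / 5) ^ 2 = (p - 1 / 5) ^ 2 by ring]

lemma one_sub_sq_le_binH {d : ℝ} (hd0 : -(1 / 2) < d) (hd1 : d < 1 / 2) :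
    1 - 6 * d ^ 2 ≤ binH (1 / 2 + d) := by
  have hl := Real.log_pos one_lt_two
  rw [binH_eq_div, le_div_iff₀ hl]
  have key : ∀ p : ℝ, 0 < p → p * (Real.log 2 + (1 - 2 * p)) ≤ p * Real.log (1 / p) := by
    intro p hp
    have h := Real.log_le_sub_one_of_pos (show 0 < 2 * p by positivity)
    rw [Real.log_mul two_ne_zero hp.ne'] at h
    rw [one_div, Real.log_inv]
    exact mul_le_mul_of_nonneg_left (by linarith) hp.le
  have h1 := key (1 / 2 + d) (by linarith)
  have h2 := key (1 - (1 / 2 + d)) (by linarith)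
  nlinarith [Real.log_two_gt_d9, sq_nonneg d]

set_option maxHeartbeats 1000000 in
/-- Moving mass between the coarse part `(SA, WA)` and the fine part `(SB, WB)` gains an amount
controlled by the distance of `N * W / S` to `{1/2, 1}`. -/
lemma exists_shift_of_two_scales {SA SB WA WB N : ℝ} (hSA : 0 ≤ SA) (hWA : 0 ≤ WA)
    (hWB : 0 ≤ WB) (hW : 0 < WA + WB) (hN : 0 < N) (hA : SA ≤ N * WA)
    (hB : 2 * N * WB ≤ SB) (hS : SA + SB ≤ 1) (h1 : (SA + SB) / 2 ≤ N * (WA + WB))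
    (h2 : N * (WA + WB) ≤ SA + SB) :
    ∃ a b : ℝ, 0 ≤ a ∧ a < 1 / 2 ∧ 0 ≤ b ∧ b < 1 / 2 ∧
      (1 / 2 + a) * WA + (1 / 2 - b) * WB = (WA + WB) / 2 ∧
      -(Real.logb 2 (5 / 4)) + (SA + SB - N * (WA + WB)) * (N * (WA + WB) - (SA + SB) / 2) / 48
          + ((SA + SB) / 2 - 1 / 5) ^ 2 / 4 ≤
        binH (1 / 2 + a) * SA + binH (1 / 2 - b) * SB
          - binH ((1 / 2 + a) * SA + (1 / 2 - b) * SB) := by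
  obtain ⟨W, hWdef⟩ : ∃ W, W = WA + WB := ⟨_, rfl⟩
  obtain ⟨u, hu⟩ : ∃ u, u = WA / W := ⟨_, rfl⟩
  obtain ⟨v, hv⟩ : ∃ v, v = WB / W := ⟨_, rfl⟩
  have hW' : 0 < W := hWdef ▸ hW
  have hWA' : WA = W * u := by rw [hu]; field_simp
  have hWB' : WB = W * v := by rw [hv]; field_simp
  have hu0 : 0 ≤ u := by rw [hu]; positivity
  have hv0 : 0 ≤ v := by rw [hv]; positivity
  have huv : u + v = 1 := by rw [hu, hv, ← add_div, ← hWdef, div_self hW'.ne']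
  rw [← hWdef] at h1 h2 ⊢
  have hSB : 0 ≤ SB := le_trans (by positivity) hB
  obtain ⟨X, hX⟩ : ∃ X, X = N * W := ⟨_, rfl⟩
  have hA' : SA ≤ X * u := by rw [hX, mul_assoc, ← hWA']; exact hA
  have hB' : 2 * (X * v) ≤ SB := by
    rw [hX, mul_assoc N, ← hWB']
    linarith
  rw [← hX] at h1 h2 ⊢
  have hX0 : 0 < X := hX ▸ mul_pos hN hW'
  have hcross : SA * v ≤ SB * u / 2 := by
    nlinarith [mul_le_mul_of_nonneg_right hA' hv0, mul_le_mul_of_nonneg_right hB' hu0]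
  obtain ⟨D, hD⟩ : ∃ D, D = (SB * u - SA * v) / 12 := ⟨_, rfl⟩
  have hSBu : 0 ≤ SB * u := mul_nonneg hSB hu0
  have hSAv : 0 ≤ SA * v := mul_nonneg hSA hv0
  have hD0 : SB * u / 24 ≤ D := by linarith
  have hu1 : u ≤ 1 := by linarith
  have hv1 : v ≤ 1 := by linarith
  have hD1 : D ≤ 1 / 12 := by nlinarith
  have hgap : (SA + SB - X) * (X - (SA + SB) / 2) ≤ SB * u := by
    have e1 : SA + SB - X ≤ SB := by nlinarith
    have e2 : X - (SA + SB) / 2 ≤ u := by nlinarith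
    exact mul_le_mul e1 e2 (by linarith) hSB
  refine ⟨v / 12, u / 12, by positivity, by linarith, by positivity, by linarith, ?_, ?_⟩
  · rw [hWA', hWB']
    linear_combination W * huv / 2
  have b1 := one_sub_sq_le_binH (d := v / 12) (by linarith) (by linarith)
  have b2 := one_sub_sq_le_binH (d := -(u / 12)) (by linarith) (by linarith)
  rw [← sub_eq_add_neg] at b2
  have hsum : (1 / 2 + v / 12) * SA + (1 / 2 - u / 12) * SB = (SA + SB) / 2 - D := by
    rw [hD]
    ring
  have hp0 : 0 ≤ (SA + SB) / 2 - D := by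
    rw [← hsum]
    exact add_nonneg (mul_nonneg (by linarith) hSA) (mul_nonneg (by linarith) hSB)
  have b3 := binH_le_tangent hp0 (by nlinarith)
  rw [hsum]
  have c1 := mul_le_mul_of_nonneg_right b1 hSA
  have c2 := mul_le_mul_of_nonneg_right b2 hSB
  have hcost : SA * v ^ 2 + SB * u ^ 2 ≤ SB * u := by
    have f1 := mul_le_mul_of_nonneg_right hcross hv0
    have f2 : SB * u * v + SB * u * u = SB * u := by rw [← mul_add, add_comm v, huv, mul_one]
    nlinarith [mul_nonneg hSBu hv0]
  have hDD : D ^ 2 ≤ D := pow_le_of_le_one (by linarith) (by linarith) two_ne_zero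
  linarith [sq_nonneg ((SA + SB) / 2 - 1 / 5 - 2 * D)]

set_option maxHeartbeats 1000000 in
lemma gap_lower_bound {β S X : ℝ} {n : ℤ} (hβ1 : 1 ≤ β) (hβ2 : β < 2) (h1 : S / 2 ≤ X)
    (h2 : X ≤ S) (hX : X * β = 2 ^ n) :
    1 / 1000000 * (β - 5 / 4) ^ 2 ≤
      (S - X) * (X - S / 2) / 48 + (S / 2 - 1 / 5) ^ 2 / 4 := by
  obtain ⟨y, hy⟩ : ∃ y, y = S / 2 - 1 / 5 := ⟨_, rfl⟩
  obtain rfl : S = 2 / 5 + 2 * y := by linarith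
  rw [← hy]
  have hprod : 0 ≤ (2 / 5 + 2 * y - X) * (X - (2 / 5 + 2 * y) / 2) :=
    mul_nonneg (by linarith) (by linarith)
  have hx2 : (β - 5 / 4) ^ 2 ≤ 1 := by nlinarith
  by_cases hbig : 1 / 100 ≤ |y|
  · have : (1 / 100) ^ 2 ≤ y ^ 2 := by
      rw [← sq_abs y]
      gcongr
    linarith
  push Not at hbig
  obtain ⟨hy1, hy2⟩ := abs_lt.1 hbig
  have hlo : (2 : ℝ) ^ (-3 : ℤ) < 2 ^ n := by
    rw [← hX]
    norm_num
    nlinarith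
  have hhi : (2 : ℝ) ^ n < 2 ^ (0 : ℤ) := by
    rw [← hX]
    norm_num
    nlinarith
  rw [zpow_lt_zpow_iff_right₀ one_lt_two] at hlo hhi
  obtain ⟨r, hr⟩ : ∃ r, r = β * (2 / 5 + 2 * y) - 1 / 2 := ⟨_, rfl⟩
  have hxr : β - 5 / 4 = 5 / 2 * r - 5 * (β * y) := by rw [hr]; ring
  have hβy : (β * y) ^ 2 ≤ 4 * y ^ 2 := by
    rw [mul_pow]
    exact mul_le_mul_of_nonneg_right (by nlinarith) (sq_nonneg y)
  have hsq : (β - 5 / 4) ^ 2 ≤ 25 / 2 * r ^ 2 + 200 * y ^ 2 := by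
    rw [hxr]
    nlinarith [sq_nonneg (5 / 2 * r + 5 * (β * y))]
  have hr1 : r ≤ 1 := by rw [hr]; nlinarith
  have hr2 : -1 ≤ r := by rw [hr]; nlinarith
  have hrsq : r ^ 2 ≤ |r| := by
    rw [← sq_abs]
    exact pow_le_of_le_one (abs_nonneg r) (abs_le.2 ⟨hr2, hr1⟩) two_ne_zero
  have hn : n = -1 ∨ n = -2 := by omega
  rcases hn with rfl | rfl
  · norm_num at hX
    have hXr : (2 / 5 + 2 * y - X) * β = r := by rw [hr, ← hX]; ring
    have hge : r / 2 ≤ 2 / 5 + 2 * y - X := by nlinarith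
    have hr0 : 0 ≤ r := by
      rw [← hXr]
      exact mul_nonneg (by linarith) (by linarith)
    have hX4 : 1 / 4 ≤ X := by nlinarith
    have : (r / 2) * (1 / 30) ≤ (2 / 5 + 2 * y - X) * (X - (2 / 5 + 2 * y) / 2) :=
      mul_le_mul hge (by linarith) (by norm_num) (by linarith)
    rw [abs_of_nonneg hr0] at hrsq
    linarith [sq_nonneg y]
  · norm_num at hX
    have hXr : (X - (2 / 5 + 2 * y) / 2) * β = -r / 2 := by rw [hr, sub_mul, hX]; ring
    have hge : -r / 4 ≤ X - (2 / 5 + 2 * y) / 2 := by nlinarith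
    have hr0 : r ≤ 0 := by
      have := mul_nonneg (sub_nonneg.2 h1) (by linarith : (0 : ℝ) ≤ β)
      linarith
    have hX4 : X ≤ 1 / 4 := by nlinarith
    have : (1 / 30) * (-r / 4) ≤ (2 / 5 + 2 * y - X) * (X - (2 / 5 + 2 * y) / 2) :=
      mul_le_mul (by linarith) hge (by linarith) (by linarith)
    rw [abs_of_nonpos hr0] at hrsq
    linarith [sq_nonneg y]

lemma memC.summable {β : ℝ} {c : ℕ → ℝ} {b : ℕ} (h : memC β c b) : Summable c :=
  summable_of_sum_range_le (fun i => (h.1 i).1) h.2.2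

lemma div_two_pow_le {x : ℝ} (hx : 0 ≤ x) (i : ℕ) : x / 2 ^ i ≤ x :=
  div_le_self hx (one_le_pow₀ one_le_two)

lemma tsum_mul_mem_Icc {c f : ℕ → ℝ} (hc : Summable c) (hc0 : ∀ i, 0 ≤ c i)
    (hc1 : ∑' i, c i ≤ 1) (hf : ∀ i, f i ∈ Set.Icc (0 : ℝ) 1) :
    ∑' i, f i * c i ∈ Set.Icc (0 : ℝ) 1 := by
  have h0 : ∀ i, 0 ≤ f i * c i := fun i => mul_nonneg (hf i).1 (hc0 i)
  have h1 : ∀ i, f i * c i ≤ c i := fun i => mul_le_of_le_one_left (hc0 i) (hf i).2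
  exact ⟨tsum_nonneg h0, ((hc.of_nonneg_of_le h0 h1).tsum_le_tsum h1 hc).trans hc1⟩

lemma memC.bddAbove {β : ℝ} {c : ℕ → ℝ} {b : ℕ} (h : memC β c b) :
    BddAbove {y | ∃ α, memA β b c α ∧ y = Pfun c α} := by
  refine ⟨1, ?_⟩
  rintro _ ⟨α, hα, rfl⟩
  have hs1 : ∑' i, c i ≤ 1 := Real.tsum_le_of_sum_range_le (fun i => (h.1 i).1) h.2.2
  have h1 := tsum_mul_mem_Icc h.summable (fun i => (h.1 i).1) hs1
    (f := fun i => binH (α i))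
    (fun i => ⟨binH_nonneg (hα.1 i).1 (hα.1 i).2, binH_le_one (hα.1 i).1 (hα.1 i).2⟩)
  have h2 := tsum_mul_mem_Icc h.summable (fun i => (h.1 i).1) hs1 hα.1
  have h3 := binH_nonneg h2.1 h2.2
  have h4 := h1.2
  unfold Pfun
  linarith

lemma le_supP {β : ℝ} (hβ1 : 1 ≤ β) (hβ2 : β < 2) {c : ℕ → ℝ} {b : ℕ} (h : memC β c b) :
    -(Real.logb 2 (5 / 4)) + 1 / 1000000 * (β - 5 / 4) ^ 2 ≤ supP β b c := by
  have hc0 : ∀ i, 0 ≤ c i := fun i => (h.1 i).1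
  have hs := h.summable
  have hs1 : ∑' i, c i ≤ 1 := Real.tsum_le_of_sum_range_le hc0 h.2.2
  have hw0 : ∀ i, 0 ≤ c i / 2 ^ i := fun i => div_nonneg (hc0 i) (by positivity)
  have hw : Summable fun i => c i / 2 ^ i :=
    hs.of_nonneg_of_le hw0 fun i => div_two_pow_le (hc0 i) i
  have hβ0 : 0 < β := by linarith
  have hWpos : 0 < ∑' i, c i / 2 ^ i := by rw [h.2.1]; positivity
  have hWS : ∑' i, c i / 2 ^ i ≤ ∑' i, c i :=
    hw.tsum_le_tsum (fun i => div_two_pow_le (hc0 i) i) hs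
  have hSpos := hWpos.trans_le hWS
  obtain ⟨k, hk1, hk2⟩ := exists_nat_pow_near_of_lt_one (div_pos hWpos hSpos)
    ((div_le_one hSpos).2 hWS) (one_half_pos (α := ℝ)) one_half_lt_one
  rw [lt_div_iff₀ hSpos] at hk1
  rw [div_le_iff₀ hSpos] at hk2
  have hNinv : (2 : ℝ) ^ k * (1 / 2) ^ k = 1 := by rw [← mul_pow]; norm_num
  have hN : (0 : ℝ) < 2 ^ k := by positivity
  obtain ⟨cA, hcA⟩ : ∃ cA : ℕ → ℝ, cA = fun i => if i ≤ k then c i else 0 := ⟨_, rfl⟩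
  obtain ⟨cB, hcB⟩ : ∃ cB : ℕ → ℝ, cB = fun i => if i ≤ k then 0 else c i := ⟨_, rfl⟩
  have hA0 : ∀ i, 0 ≤ cA i := fun i => by simp only [hcA]; split_ifs <;> simp [hc0]
  have hB0 : ∀ i, 0 ≤ cB i := fun i => by simp only [hcB]; split_ifs <;> simp [hc0]
  have hAc : ∀ i, cA i ≤ c i := fun i => by simp only [hcA]; split_ifs <;> simp [hc0]
  have hBc : ∀ i, cB i ≤ c i := fun i => by simp only [hcB]; split_ifs <;> simp [hc0]
  have hAB : ∀ i, cA i + cB i = c i := fun i => by simp only [hcA, hcB]; split_ifs <;> simp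
  have sA := hs.of_nonneg_of_le hA0 hAc
  have sB := hs.of_nonneg_of_le hB0 hBc
  have sWA : Summable fun i => cA i / 2 ^ i :=
    sA.of_nonneg_of_le (fun i => div_nonneg (hA0 i) (by positivity))
      fun i => div_two_pow_le (hA0 i) i
  have sWB : Summable fun i => cB i / 2 ^ i :=
    sB.of_nonneg_of_le (fun i => div_nonneg (hB0 i) (by positivity))
      fun i => div_two_pow_le (hB0 i) i
  have eS : ∑' i, cA i + ∑' i, cB i = ∑' i, c i := by
    rw [← sA.tsum_add sB]
    exact tsum_congr hAB
  have eW : ∑' i, cA i / 2 ^ i + ∑' i, cB i / 2 ^ i = ∑' i, c i / 2 ^ i := by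
    rw [← sWA.tsum_add sWB]
    exact tsum_congr fun i => by rw [← add_div, hAB]
  have hA : ∑' i, cA i ≤ 2 ^ k * ∑' i, cA i / 2 ^ i := by
    rw [← tsum_mul_left]
    refine sA.tsum_le_tsum (fun i => ?_) (sWA.mul_left _)
    by_cases hi : i ≤ k
    · rw [mul_div_assoc', le_div_iff₀ (by positivity), mul_comm]
      exact mul_le_mul_of_nonneg_right (pow_le_pow_right₀ one_le_two hi) (hA0 i)
    · simp [hcA, hi]
  have hB : 2 * 2 ^ k * ∑' i, cB i / 2 ^ i ≤ ∑' i, cB i := by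
    rw [← tsum_mul_left]
    refine (sWB.mul_left _).tsum_le_tsum (fun i => ?_) sB
    by_cases hi : i ≤ k
    · simp [hcB, hi]
    · rw [mul_div_assoc', div_le_iff₀ (by positivity), mul_comm (cB i), ← pow_succ']
      exact mul_le_mul_of_nonneg_right (pow_le_pow_right₀ one_le_two (by omega)) (hB0 i)
  have hX1 : (∑' i, c i) / 2 ≤ 2 ^ k * ∑' i, c i / 2 ^ i := by
    have := mul_le_mul_of_nonneg_left hk1.le hN.le
    rw [pow_succ, ← mul_assoc, ← mul_assoc, hNinv] at this
    linarith
  have hX2 : 2 ^ k * ∑' i, c i / 2 ^ i ≤ ∑' i, c i := by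
    have := mul_le_mul_of_nonneg_left hk2 hN.le
    rwa [← mul_assoc, hNinv, one_mul] at this
  obtain ⟨x, y, hx0, hx1, hy0, hy1, hmom, hP⟩ :=
    exists_shift_of_two_scales (tsum_nonneg hA0)
      (tsum_nonneg fun i => div_nonneg (hA0 i) (by positivity))
      (tsum_nonneg fun i => div_nonneg (hB0 i) (by positivity))
      (by rwa [eW]) hN hA hB (by rwa [eS]) (by rwa [eS, eW]) (by rwa [eS, eW])
  rw [eW] at hmom
  rw [eS, eW] at hP
  have hgap := gap_lower_bound (n := (k : ℤ) - b) hβ1 hβ2 hX1 hX2 (by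
    rw [h.2.1, zpow_sub₀ two_ne_zero, zpow_natCast, zpow_natCast]
    field_simp)
  obtain ⟨α, hα⟩ : ∃ α : ℕ → ℝ, α = fun i => if i ≤ k then 1 / 2 + x else 1 / 2 - y := ⟨_, rfl⟩
  have split : ∀ (F : ℝ → ℝ) (i : ℕ),
      F (α i) * c i = F (1 / 2 + x) * cA i + F (1 / 2 - y) * cB i := fun F i => by
    simp only [hα, hcA, hcB]
    split_ifs <;> simp
  have tsplit : ∀ F : ℝ → ℝ, ∑' i, F (α i) * c i =
      F (1 / 2 + x) * ∑' i, cA i + F (1 / 2 - y) * ∑' i, cB i := fun F => by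
    rw [tsum_congr (split F), (sA.mul_left _).tsum_add (sB.mul_left _), tsum_mul_left,
      tsum_mul_left]
  have hmem : memA β b c α := by
    refine ⟨fun i => ?_, ?_⟩
    · simp only [hα]
      split_ifs <;> constructor <;> linarith
    · have : ∀ i, α i * c i / 2 ^ i =
          (1 / 2 + x) * (cA i / 2 ^ i) + (1 / 2 - y) * (cB i / 2 ^ i) := fun i => by
        rw [split (fun z => z) i]
        ring
      rw [tsum_congr this, (sWA.mul_left _).tsum_add (sWB.mul_left _), tsum_mul_left,
        tsum_mul_left, hmom, h.2.1, pow_succ]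
      field_simp
  refine le_trans ?_ (le_csSup h.bddAbove ⟨α, hmem, rfl⟩)
  rw [Pfun, tsplit binH, tsplit fun z => z]
  linarith

lemma memC_single {β : ℝ} (hβ1 : 1 ≤ β) : memC β (fun i => if i = 0 then 1 / β else 0) 0 := by
  have h0 : 0 ≤ 1 / β := by positivity
  have h1 : 1 / β ≤ 1 := (div_le_one (by linarith)).2 hβ1
  refine ⟨fun i => ?_, ?_, fun n => ?_⟩
  · dsimp only
    split_ifs
    · exact ⟨h0, h1⟩
    · simp
  · rw [tsum_eq_single 0 fun i hi => by simp [hi]]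
    simp
  · rw [Finset.sum_ite_eq']
    split_ifs
    · exact h1
    · exact zero_le_one

lemma le_Gfun {β : ℝ} (hβ1 : 1 ≤ β) (hβ2 : β < 2) :
    -(Real.logb 2 (5 / 4)) + 1 / 1000000 * (β - 5 / 4) ^ 2 ≤ Gfun β := by
  refine le_csInf ⟨_, _, _, memC_single hβ1, rfl⟩ ?_
  rintro _ ⟨c, b, h, rfl⟩
  exact le_supP hβ1 hβ2 h

/-- For every fixed `ε > 0` there is `C₀ > 0` with
`G(β) ≥ −log₂(5/4) + C₀·|β − 5/4|^{2+ε}` for all `β ∈ [1,2)`; in particular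
`G(β) > −log₂(5/4)` whenever `β ≠ 5/4`. -/
theorem G_gt_away_from_five_fourths :
    (∀ ε > (0 : ℝ), ∃ C₀ > (0 : ℝ), ∀ β ∈ Set.Ico (1 : ℝ) 2,
      -(Real.logb 2 (5 / 4)) + C₀ * |β - 5 / 4| ^ ((2 : ℝ) + ε) ≤ Gfun β) ∧
    (∀ β ∈ Set.Ico (1 : ℝ) 2, β ≠ 5 / 4 → -(Real.logb 2 (5 / 4)) < Gfun β) := by
  refine ⟨fun ε hε => ⟨1 / 1000000, by norm_num, fun β hβ => ?_⟩, fun β hβ hne => ?_⟩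
  · refine le_trans ?_ (le_Gfun hβ.1 hβ.2)
    have h1 : |β - 5 / 4| ≤ 1 := abs_le.2 ⟨by linarith [hβ.1], by linarith [hβ.2]⟩
    have h2 : |β - 5 / 4| ^ ((2 : ℝ) + ε) ≤ (β - 5 / 4) ^ 2 := by
      rw [← sq_abs, ← Real.rpow_two]
      exact Real.rpow_le_rpow_of_exponent_ge_of_imp (abs_nonneg _) h1 (by linarith)
        fun _ h => absurd h (by positivity)
    linarith
  · have h := le_Gfun hβ.1 hβ.2
    have : 0 < (β - 5 / 4) ^ 2 := by
      have := sub_ne_zero.2 hne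
      positivity
    linarith
end
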